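/- arXiv:1108.5568 — 2 statements merged into one kernel-verified Lean document; each statement's English description precedes it below -/
import Mathlib

section
/- Under hypotheses (H0)–(H3), the square-integrable martingale differences Z_n = χ(X_n) − χ(X_{n−1}) + ψ(X_n) satisfy (1/n) Σ_{l=1}^n Z_l² → σ² P_μ-almost surely as n → ∞. -/
open MeasureTheory ProbabilityTheory Filter Bornology
open scoped ENNReal NNReal Topology

variable {E : Type*} [MeasurableSpace E] [MetricSpace E] [CompleteSpace E]
  [SecondCountableTopology E] [BorelSpace E]

/-- The Markov operator acting on functions: `Pf(x) = ∫ f(y) π(x, dy)`. -/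
noncomputable def Pfun (π : Kernel E E) (f : E → ℝ) : E → ℝ := fun x => ∫ y, f y ∂(π x)

/-- The Markov operator acting on measures (the transfer operator `ν ↦ νP`). -/
noncomputable def Pmeas (π : Kernel E E) (ν : MeasureTheory.Measure E) :
    MeasureTheory.Measure E := ν.bind (fun x => π x)

/-- `ν ∈ M_{1,1}`: a Borel probability measure with finite first moment. -/
def FiniteFirstMoment (ν : MeasureTheory.Measure E) : Prop :=
  IsProbabilityMeasure ν ∧ ∃ x₀ : E, Integrable (fun x => dist x₀ x) ν

/-- The Wasserstein (dual-Lipschitz) distance between two measures. -/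
noncomputable def wassDist (ν₁ ν₂ : MeasureTheory.Measure E) : ℝ :=
  sSup {r : ℝ | ∃ f : E → ℝ, LipschitzWith 1 f ∧ r = |∫ x, f x ∂ν₁ - ∫ x, f x ∂ν₂|}

/-- The natural filtration of the coordinate process on `ℕ → E`. -/
def natFilt : Filtration ℕ (MeasurableSpace.pi : MeasurableSpace (ℕ → E)) :=
  Filtration.natural (fun k (ω : ℕ → E) => ω k)
    (fun k => (measurable_pi_apply k).stronglyMeasurable)

/-- `ℙ` is the law of the Markov chain on `E^ℕ` with transition probability `π` and
initial distribution `ν`. -/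
structure IsMarkovChainLaw (π : Kernel E E) (ν : MeasureTheory.Measure E)
    (P : MeasureTheory.Measure (ℕ → E)) : Prop where
  prob : IsProbabilityMeasure P
  init : P.map (fun ω => ω 0) = ν
  markov : ∀ (n : ℕ) (g : E → ℝ), Measurable g → IsBounded (Set.range g) →
    P[(fun ω => g (ω (n + 1))) | natFilt n] =ᵐ[P] fun ω => ∫ y, g y ∂(π (ω n))

/-- The corrector function `χ = ∑_{i≥0} Pⁱψ`. -/
noncomputable def chiFun (π : Kernel E E) (ψ : E → ℝ) : E → ℝ :=
  fun x => ∑' i : ℕ, (Pfun π)^[i] ψ x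

/-- The martingale `S_n = χ(X_n) - χ(X_0) + ∑_{i=0}^n ψ(X_i)` as a function of the trajectory. -/
noncomputable def SFun (π : Kernel E E) (ψ : E → ℝ) (n : ℕ) : (ℕ → E) → ℝ :=
  fun ω => chiFun π ψ (ω n) - chiFun π ψ (ω 0) + ∑ i ∈ Finset.range (n + 1), ψ (ω i)

/-- The martingale differences `Z_n = χ(X_n) - χ(X_{n-1}) + ψ(X_n)`. -/
noncomputable def ZFun (π : Kernel E E) (ψ : E → ℝ) (n : ℕ) : (ℕ → E) → ℝ :=
  fun ω => chiFun π ψ (ω n) - chiFun π ψ (ω (n - 1)) + ψ (ω n)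

set_option linter.unusedSectionVars false

def LipR (f : E → ℝ) (L : ℝ) : Prop := ∀ x y, |f x - f y| ≤ L * dist x y

lemma LipR.lipschitz {f : E → ℝ} {L : ℝ} (hf : LipR f L) : LipschitzWith L.toNNReal f := by
  refine LipschitzWith.of_dist_le_mul fun x y => ?_
  rw [Real.dist_eq]
  exact (hf x y).trans (mul_le_mul_of_nonneg_right (Real.le_coe_toNNReal L) dist_nonneg)

lemma LipR.integrable {f : E → ℝ} {L : ℝ} (hf : LipR f L) {ν : Measure E}
    (hν : FiniteFirstMoment ν) : Integrable f ν := by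
  obtain ⟨hp, a, ha⟩ := hν
  have : Integrable (fun x => |f a| + L * dist a x) ν := (integrable_const _).add (ha.const_mul L)
  refine this.mono' hf.lipschitz.continuous.aestronglyMeasurable (ae_of_all _ fun x => ?_)
  have h1 := hf a x
  rw [Real.norm_eq_abs]
  have := abs_sub_abs_le_abs_sub (f x) (f a)
  rw [abs_sub_comm] at h1
  linarith

lemma lipR_dist (a : E) : LipR (fun x => dist a x) 1 := by
  intro x y
  rw [one_mul]
  have := abs_dist_sub_le x y a
  simpa [dist_comm] using this

lemma lip_int_sub {f : E → ℝ} (hf : LipR f 1) {ν₁ ν₂ : Measure E}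
    (h1 : FiniteFirstMoment ν₁) (h2 : FiniteFirstMoment ν₂) (a : E) :
    |∫ x, f x ∂ν₁ - ∫ x, f x ∂ν₂| ≤ ∫ x, dist a x ∂ν₁ + ∫ x, dist a x ∂ν₂ := by
  have key : ∀ ν : Measure E, FiniteFirstMoment ν → |∫ x, f x ∂ν - f a| ≤ ∫ x, dist a x ∂ν := by
    intro ν hν
    have := hν.1
    have e : ∫ x, f x ∂ν - f a = ∫ x, (f x - f a) ∂ν := by
      rw [integral_sub (hf.integrable hν) (integrable_const _)]; simp
    rw [e]
    refine (abs_integral_le_integral_abs).trans ?_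
    refine integral_mono ((hf.integrable hν).sub (integrable_const _)).abs
      ((lipR_dist a).integrable hν) fun x => ?_
    have := hf x a
    rw [one_mul, dist_comm] at this
    exact this
  have k1 := key _ h1
  have k2 := key _ h2
  rw [abs_le] at *
  constructor <;> linarith

lemma lipR_one_iff {f : E → ℝ} : LipschitzWith 1 f ↔ LipR f 1 := by
  constructor
  · intro h x y
    have := h.dist_le_mul x y
    rwa [Real.dist_eq] at this
  · intro h
    have := h.lipschitz
    simpa using this

lemma wassDist_nonneg (ν₁ ν₂ : Measure E) : 0 ≤ wassDist ν₁ ν₂ := by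
  apply Real.sSup_nonneg
  rintro r ⟨f, -, rfl⟩
  exact abs_nonneg _

lemma wassDist_le {ν₁ ν₂ : Measure E}
    (h1 : FiniteFirstMoment ν₁) (h2 : FiniteFirstMoment ν₂) (a : E) :
    wassDist ν₁ ν₂ ≤ ∫ x, dist a x ∂ν₁ + ∫ x, dist a x ∂ν₂ := by
  apply Real.sSup_le
  · rintro r ⟨f, hf, rfl⟩
    exact lip_int_sub (lipR_one_iff.1 hf) h1 h2 a
  · exact add_nonneg (integral_nonneg fun _ => dist_nonneg) (integral_nonneg fun _ => dist_nonneg)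

lemma ffm_dirac (x : E) : FiniteFirstMoment (Measure.dirac x) :=
  ⟨inferInstance, x, integrable_dirac (by simp)⟩

lemma wassDist_dirac (x y : E) : wassDist (Measure.dirac x) (Measure.dirac y) ≤ dist x y := by
  apply Real.sSup_le _ dist_nonneg
  rintro r ⟨f, hf, rfl⟩
  simpa using (lipR_one_iff.1 hf) x y

lemma LipR.le_wass {f : E → ℝ} {L : ℝ} (hL : 0 < L) (hf : LipR f L) {ν₁ ν₂ : Measure E}
    (h1 : FiniteFirstMoment ν₁) (h2 : FiniteFirstMoment ν₂) :
    |∫ x, f x ∂ν₁ - ∫ x, f x ∂ν₂| ≤ L * wassDist ν₁ ν₂ := by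
  obtain ⟨a, -⟩ := h1.2
  have hg : LipR (fun x => L⁻¹ * f x) 1 := by
    intro x y
    rw [← mul_sub, abs_mul, abs_of_pos (inv_pos.2 hL), one_mul, inv_mul_le_iff₀ hL]
    exact hf x y
  have : |∫ x, L⁻¹ * f x ∂ν₁ - ∫ x, L⁻¹ * f x ∂ν₂| ≤ wassDist ν₁ ν₂ := by
    apply le_csSup
    · refine ⟨∫ x, dist a x ∂ν₁ + ∫ x, dist a x ∂ν₂, ?_⟩
      rintro r ⟨f, hf, rfl⟩
      exact lip_int_sub (lipR_one_iff.1 hf) h1 h2 a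
    · exact ⟨_, lipR_one_iff.2 hg, rfl⟩
  rw [integral_const_mul, integral_const_mul, ← mul_sub, abs_mul, abs_of_pos (inv_pos.2 hL),
    inv_mul_le_iff₀ hL] at this
  exact this

/-- Standing assumptions (H1), (H2). -/
structure Gap (π : Kernel E E) (γ c : ℝ) : Prop where
  g0 : 0 < γ
  g1 : γ < 1
  c0 : 0 < c
  H1 : ∀ ν : Measure E, FiniteFirstMoment ν → FiniteFirstMoment (Pmeas π ν)
  H2 : ∀ n : ℕ, 1 ≤ n → ∀ ν₁ ν₂ : Measure E, FiniteFirstMoment ν₁ →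
      FiniteFirstMoment ν₂ →
      wassDist ((Pmeas π)^[n] ν₁) ((Pmeas π)^[n] ν₂) ≤ c * γ ^ n * wassDist ν₁ ν₂

section gap
variable {π : Kernel E E} {γ c : ℝ}

lemma Gap.wass (h : Gap π γ c) (n : ℕ) {ν₁ ν₂ : Measure E} (h1 : FiniteFirstMoment ν₁)
    (h2 : FiniteFirstMoment ν₂) :
    wassDist ((Pmeas π)^[n] ν₁) ((Pmeas π)^[n] ν₂) ≤ (1 + c) * γ ^ n * wassDist ν₁ ν₂ := by
  have hw := wassDist_nonneg ν₁ ν₂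
  rcases Nat.eq_zero_or_pos n with rfl | hn
  · have := h.c0
    simp
    nlinarith
  · refine (h.H2 n hn _ _ h1 h2).trans ?_
    have := pow_pos h.g0 n
    gcongr
    linarith

lemma Gap.iter (h : Gap π γ c) (n : ℕ) {ν : Measure E} (h1 : FiniteFirstMoment ν) :
    FiniteFirstMoment ((Pmeas π)^[n] ν) := by
  induction n generalizing ν with
  | zero => simpa
  | succ n ih => rw [Function.iterate_succ_apply]; exact ih (h.H1 _ h1)

lemma Pmeas_dirac (x : E) : Pmeas π (Measure.dirac x) = π x := by
  unfold Pmeas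
  exact Measure.dirac_bind π.measurable x

lemma Gap.ffm (h : Gap π γ c) (x : E) : FiniteFirstMoment (π x) := by
  rw [← Pmeas_dirac]; exact h.H1 _ (ffm_dirac x)

lemma Gap.wass_kernel (h : Gap π γ c) (x y : E) :
    wassDist (π x) (π y) ≤ (1 + c) * dist x y := by
  have := h.wass 1 (ffm_dirac x) (ffm_dirac y)
  simp only [Function.iterate_one, Pmeas_dirac, pow_one] at this
  refine this.trans ?_
  have h1 := wassDist_dirac x y
  have h0 := wassDist_nonneg (Measure.dirac x) (Measure.dirac y)
  have := h.c0
  have := h.g0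
  have := h.g1
  have : (1 + c) * γ ≤ 1 + c := by nlinarith
  exact mul_le_mul this h1 h0 (by linarith)

lemma LipR.Pfun (h : Gap π γ c) {f : E → ℝ} {L : ℝ} (hL : 0 < L) (hf : LipR f L) :
    LipR (Pfun π f) (L * (1 + c)) := by
  intro x y
  refine (hf.le_wass hL (h.ffm x) (h.ffm y)).trans ?_
  rw [mul_assoc]
  exact mul_le_mul_of_nonneg_left (h.wass_kernel x y) hL.le

lemma integral_Pmeas {ν : Measure E} {f : E → ℝ} (hf : Integrable f (Pmeas π ν)) :
    ∫ x, f x ∂(Pmeas π ν) = ∫ x, Pfun π f x ∂ν := by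
  have e : Pmeas π ν = (π ∘ₖ (Kernel.const Unit ν)) () := by
    rw [Kernel.comp_apply, Kernel.const_apply]; rfl
  rw [e] at hf ⊢
  rw [Kernel.integral_comp hf, Kernel.const_apply]
  rfl

lemma Gap.integral_iter (h : Gap π γ c) (n : ℕ) {ν : Measure E} (h1 : FiniteFirstMoment ν)
    {f : E → ℝ} {L : ℝ} (hL : 0 < L) (hf : LipR f L) :
    ∫ x, f x ∂((Pmeas π)^[n] ν) = ∫ x, (Pfun π)^[n] f x ∂ν := by
  induction n generalizing f L with
  | zero => simp
  | succ n ih =>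
    have hc := h.c0
    rw [Function.iterate_succ_apply', Function.iterate_succ_apply,
      ← ih (L := L * (1 + c)) (by positivity) (LipR.Pfun h hL hf), integral_Pmeas]
    exact hf.integrable (h.H1 _ (h.iter n h1))

lemma Gap.iter_eq (h : Gap π γ c) (n : ℕ) {f : E → ℝ} {L : ℝ} (hL : 0 < L) (hf : LipR f L)
    (x : E) : (Pfun π)^[n] f x = ∫ y, f y ∂((Pmeas π)^[n] (Measure.dirac x)) := by
  rw [h.integral_iter n (ffm_dirac x) hL hf]; simp

lemma Gap.iter_lip (h : Gap π γ c) (n : ℕ) {f : E → ℝ} {L : ℝ} (hL : 0 < L) (hf : LipR f L) :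
    LipR ((Pfun π)^[n] f) (L * (1 + c) * γ ^ n) := by
  intro x y
  rw [h.iter_eq n hL hf, h.iter_eq n hL hf]
  refine (hf.le_wass hL (h.iter n (ffm_dirac x)) (h.iter n (ffm_dirac y))).trans ?_
  have h1 := h.wass n (ffm_dirac x) (ffm_dirac y)
  have h2 := wassDist_dirac x y
  have hc := h.c0
  have := pow_pos h.g0 n
  calc _ ≤ L * ((1 + c) * γ ^ n * dist x y) := by
        refine mul_le_mul_of_nonneg_left (h1.trans ?_) hL.le
        gcongr
    _ = _ := by ring

lemma Gap.iter_star (h : Gap π γ c) {μstar : Measure E} (hs : FiniteFirstMoment μstar)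
    (hinv : Pmeas π μstar = μstar) (n : ℕ) {f : E → ℝ} {L : ℝ} (hL : 0 < L) (hf : LipR f L)
    (a x : E) : |(Pfun π)^[n] f x - ∫ y, f y ∂μstar| ≤
      L * (1 + c) * γ ^ n * (dist a x + ∫ y, dist a y ∂μstar) := by
  have e : (Pmeas π)^[n] μstar = μstar := Function.iterate_fixed hinv n
  rw [h.iter_eq n hL hf]
  have k := hf.le_wass hL (h.iter n (ffm_dirac x)) (h.iter n hs)
  rw [e] at k
  refine k.trans ?_
  have h1 := h.wass n (ffm_dirac x) hs
  rw [e] at h1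
  have h2 := wassDist_le (ffm_dirac x) hs a
  rw [integral_dirac] at h2
  have hc := h.c0
  have := pow_pos h.g0 n
  calc _ ≤ L * ((1 + c) * γ ^ n * (dist a x + ∫ y, dist a y ∂μstar)) := by
        refine mul_le_mul_of_nonneg_left (h1.trans ?_) hL.le
        gcongr
    _ = _ := by ring

lemma Gap.chi (h : Gap π γ c) {μstar : Measure E} (hs : FiniteFirstMoment μstar)
    (hinv : Pmeas π μstar = μstar) {ψ : E → ℝ} {L : ℝ} (hL : 0 < L) (hf : LipR ψ L)
    (hψ0 : ∫ x, ψ x ∂μstar = 0) : ∃ L', 0 < L' ∧ LipR (chiFun π ψ) L' := by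
  have hg := summable_geometric_of_lt_one h.g0.le h.g1
  have hc := h.c0
  have hsum : ∀ x, Summable fun i : ℕ => (Pfun π)^[i] ψ x := by
    intro x
    refine Summable.of_norm_bounded (g := fun n => L * (1 + c) * γ ^ n *
      (dist x x + ∫ y, dist x y ∂μstar)) ?_ fun n => ?_
    · exact (hg.mul_left _).mul_right _
    · have := h.iter_star hs hinv n hL hf x x
      rwa [hψ0, sub_zero] at this
  refine ⟨L * (1 + c) * ∑' n : ℕ, γ ^ n, ?_, fun x y => ?_⟩
  · rw [tsum_geometric_of_lt_one h.g0.le h.g1]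
    have : 0 < 1 - γ := by linarith [h.g1]
    positivity
  · unfold chiFun
    rw [← (hsum x).tsum_sub (hsum y), ← tsum_mul_left, ← tsum_mul_right]
    have := tsum_of_norm_bounded (((hg.mul_left (L * (1 + c))).mul_right (dist x y))).hasSum
      (f := fun i => (Pfun π)^[i] ψ x - (Pfun π)^[i] ψ y) (fun i => h.iter_lip i hL hf x y)
    exact this

end gap

section markov
variable {π : Kernel E E} [IsMarkovKernel π] {ν : Measure E} {P : Measure (ℕ → E)}

lemma meas_coord (n : ℕ) {k : ℕ} (hk : k ≤ n) :
    Measurable[natFilt (E := E) n] (fun ω : ℕ → E => ω k) := by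
  have h1 : Measurable[natFilt (E := E) k] (fun ω : ℕ → E => ω k) :=
    ((Filtration.stronglyAdapted_natural (u := fun k (ω : ℕ → E) => ω k)
      (fun k => (measurable_pi_apply k).stronglyMeasurable)) k).measurable
  exact h1.mono ((natFilt (E := E)).mono hk) le_rfl

lemma markov_law (hP : IsMarkovChainLaw π ν P) (n : ℕ) {U : (ℕ → E) → ℝ}
    (hU : Measurable[natFilt n] U) :
    P.map (fun ω => ((U ω, ω n), ω (n + 1))) =
      (P.map (fun ω => (U ω, ω n))) ⊗ₘ (π.comap (fun s : ℝ × E => s.2) measurable_snd) := by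
  have := hP.prob
  have hUm : Measurable U := hU.mono ((natFilt (E := E)).le n) le_rfl
  have hT : Measurable (fun ω : ℕ → E => (U ω, ω n)) := hUm.prodMk (measurable_pi_apply n)
  have hTn : Measurable[natFilt n] (fun ω : ℕ → E => (U ω, ω n)) :=
    hU.prodMk (meas_coord n le_rfl)
  have hTT : Measurable (fun ω : ℕ → E => ((U ω, ω n), ω (n + 1))) :=
    hT.prodMk (measurable_pi_apply (n + 1))
  have : IsProbabilityMeasure (P.map (fun ω : ℕ → E => (U ω, ω n))) :=
    Measure.isProbabilityMeasure_map hT.aemeasurable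
  have : IsProbabilityMeasure (P.map (fun ω : ℕ → E => ((U ω, ω n), ω (n + 1)))) :=
    Measure.isProbabilityMeasure_map hTT.aemeasurable
  apply Measure.ext_prod
  intro A B hA hB
  rw [Measure.compProd_apply_prod hA hB, Measure.map_apply hTT (hA.prod hB),
    setLIntegral_map hA (Kernel.measurable_coe _ hB) hT]
  have hAn : MeasurableSet[natFilt n] ((fun ω : ℕ → E => (U ω, ω n)) ⁻¹' A) := hTn hA
  have hAm := hT hA
  set A' := (fun ω : ℕ → E => (U ω, ω n)) ⁻¹' A with hA'
  let g : E → ℝ := B.indicator fun _ => 1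
  have hg : Measurable g := measurable_const.indicator hB
  have hg1 : ∀ x, ‖g x‖ ≤ 1 := fun x => by
    by_cases h : x ∈ B <;> simp [g, h]
  have hgb : IsBounded (Set.range g) := by
    rw [isBounded_iff_forall_norm_le]
    exact ⟨1, by rintro _ ⟨x, rfl⟩; exact hg1 x⟩
  have hgi : Integrable (fun ω : ℕ → E => g (ω (n + 1))) P :=
    Integrable.of_bound ((hg.comp (measurable_pi_apply (n + 1))).aestronglyMeasurable) 1
      (ae_of_all _ fun ω => hg1 _)
  have k := setIntegral_condExp ((natFilt (E := E)).le n) hgi hAn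
  rw [setIntegral_congr_ae hAm ((hP.markov n g hg hgb).mono fun x hx _ => hx)] at k
  have e1 : ∀ x, ∫ y, g y ∂(π x) = (π x).real B := fun x => by
    simp [g, integral_indicator hB]
  have e2 : ∫ ω in A', g (ω (n + 1)) ∂P =
      P.real ((fun ω : ℕ → E => ((U ω, ω n), ω (n + 1))) ⁻¹' A ×ˢ B) := by
    have : (fun ω : ℕ → E => g (ω (n + 1))) =
        ((fun ω : ℕ → E => ω (n + 1)) ⁻¹' B).indicator fun _ => 1 := by
      rfl
    rw [this, setIntegral_indicator (measurable_pi_apply (n + 1) hB)]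
    simp only [integral_const, smul_eq_mul, mul_one]
    rw [measureReal_restrict_apply_univ]
    congr 1
  simp_rw [e1] at k
  rw [e2] at k
  have e3 : ∫⁻ ω in A', (π (ω n)) B ∂P = ENNReal.ofReal (∫ ω in A', (π (ω n)).real B ∂P) := by
    rw [ofReal_integral_eq_lintegral_ofReal]
    · simp
    · refine (Integrable.of_bound (C := 1) ?_ (ae_of_all _ fun ω => ?_)).integrableOn
      · exact (((Kernel.measurable_coe π hB).comp
          (measurable_pi_apply n)).ennreal_toReal).aestronglyMeasurable
      · rw [Real.norm_eq_abs, abs_of_nonneg measureReal_nonneg]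
        exact measureReal_le_one
    · exact ae_of_all _ fun ω => measureReal_nonneg
  simp only [Kernel.comap_apply]
  rw [e3, k]
  simp

lemma markov_A (hP : IsMarkovChainLaw π ν P) (n : ℕ) {U : (ℕ → E) → ℝ}
    (hU : Measurable[natFilt n] U) {B C : ℝ} (hUb : ∀ ω, |U ω| ≤ B)
    {F : E × E → ℝ} (hF : Measurable F) (hFb : ∀ z, |F z| ≤ C) :
    ∫ ω, U ω * F (ω n, ω (n + 1)) ∂P = ∫ ω, U ω * ∫ y, F (ω n, y) ∂(π (ω n)) ∂P := by
  have := hP.prob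
  have hUm : Measurable U := hU.mono ((natFilt (E := E)).le n) le_rfl
  have hT : Measurable (fun ω : ℕ → E => (U ω, ω n)) := hUm.prodMk (measurable_pi_apply n)
  have hTT : Measurable (fun ω : ℕ → E => ((U ω, ω n), ω (n + 1))) :=
    hT.prodMk (measurable_pi_apply (n + 1))
  have hp1 : IsProbabilityMeasure (P.map (fun ω : ℕ → E => (U ω, ω n))) :=
    Measure.isProbabilityMeasure_map hT.aemeasurable
  have hΦ : Measurable (fun s : (ℝ × E) × E => s.1.1 * F (s.1.2, s.2)) := by fun_prop
  have hint : Integrable (fun ω : ℕ → E => U ω * F (ω n, ω (n + 1))) P := by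
    refine Integrable.of_bound (C := B * C) (hΦ.comp hTT).aestronglyMeasurable
      (ae_of_all _ fun ω => ?_)
    rw [Real.norm_eq_abs, abs_mul]
    exact mul_le_mul (hUb ω) (hFb _) (abs_nonneg _) ((abs_nonneg _).trans (hUb ω))
  have e1 : ∫ ω, U ω * F (ω n, ω (n + 1)) ∂P =
      ∫ s, s.1.1 * F (s.1.2, s.2) ∂(P.map (fun ω : ℕ → E => ((U ω, ω n), ω (n + 1)))) := by
    rw [integral_map hTT.aemeasurable hΦ.aestronglyMeasurable]
  rw [e1, markov_law hP n hU, Measure.integral_compProd, integral_map hT.aemeasurable]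
  · simp only [Kernel.comap_apply, integral_const_mul]
  · exact (hΦ.stronglyMeasurable.integral_kernel_prod_right').aestronglyMeasurable
  · rw [← markov_law hP n hU, integrable_map_measure hΦ.aestronglyMeasurable hTT.aemeasurable]
    exact hint

lemma Pfun_meas {f : E → ℝ} (hf : Measurable f) : Measurable (Pfun π f) :=
  (hf.stronglyMeasurable.integral_kernel).measurable

lemma Pfun_bound {f : E → ℝ} {C : ℝ} (hf : ∀ x, |f x| ≤ C) (x : E) : |Pfun π f x| ≤ C := by
  have := norm_integral_le_of_norm_le_const (μ := π x) (f := f) (C := C) (ae_of_all _ hf)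
  simpa [Pfun] using this

lemma iter_bound {f : E → ℝ} {C : ℝ} (hfm : Measurable f) (hf : ∀ x, |f x| ≤ C) (j : ℕ) :
    Measurable ((Pfun π)^[j] f) ∧ ∀ x, |(Pfun π)^[j] f x| ≤ C := by
  induction j with
  | zero => exact ⟨hfm, hf⟩
  | succ j ih =>
    rw [Function.iterate_succ_apply']
    exact ⟨Pfun_meas ih.1, Pfun_bound ih.2⟩

lemma markov_B (hP : IsMarkovChainLaw π ν P) (n j : ℕ) {U : (ℕ → E) → ℝ}
    (hU : Measurable[natFilt n] U) {B C : ℝ} (hUb : ∀ ω, |U ω| ≤ B)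
    {f : E → ℝ} (hF : Measurable f) (hFb : ∀ z, |f z| ≤ C) :
    ∫ ω, U ω * f (ω (n + j)) ∂P = ∫ ω, U ω * (Pfun π)^[j] f (ω n) ∂P := by
  induction j generalizing f with
  | zero => simp
  | succ j ih =>
    have hU' : Measurable[natFilt (n + j)] U :=
      hU.mono ((natFilt (E := E)).mono (Nat.le_add_right n j)) le_rfl
    have := markov_A hP (n + j) hU' hUb (F := fun z => f z.2) (hF.comp measurable_snd)
      (fun z => hFb z.2)
    rw [Function.iterate_succ_apply, ← ih (f := Pfun π f) (Pfun_meas hF) (Pfun_bound hFb)]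
    exact this

end markov

section core

def PairLip (G : E → E → ℝ) (L : ℝ) : Prop :=
  ∀ x x' y y', |G x y - G x' y'| ≤ L * (dist x x' + dist y y')

noncomputable def FR (G : E → E → ℝ) (R : ℝ) (z : E × E) : ℝ := (min |G z.1 z.2| R) ^ 2

noncomputable def hR (π : Kernel E E) (G : E → E → ℝ) (R : ℝ) (x : E) : ℝ :=
  ∫ y, FR G R (x, y) ∂(π x)

variable {π : Kernel E E} {γ c : ℝ} {G : E → E → ℝ} {L R : ℝ}

lemma PairLip.cont (hG : PairLip G L) (hL : 0 < L) : Continuous (fun z : E × E => G z.1 z.2) := by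
  have : LipschitzWith (2 * L).toNNReal (fun z : E × E => G z.1 z.2) := by
    refine LipschitzWith.of_dist_le_mul fun x y => ?_
    rw [Real.dist_eq, Real.coe_toNNReal _ (by positivity)]
    refine (hG _ _ _ _).trans ?_
    have h1 : dist x.1 y.1 ≤ dist x y := le_max_left _ _
    have h2 : dist x.2 y.2 ≤ dist x y := le_max_right _ _
    nlinarith
  exact this.continuous

lemma FR_nonneg (z : E × E) : 0 ≤ FR G R z := sq_nonneg _

lemma FR_le (hR0 : 0 ≤ R) (z : E × E) : FR G R z ≤ R ^ 2 := by
  unfold FR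
  have h0 : 0 ≤ min |G z.1 z.2| R := le_min (abs_nonneg _) hR0
  have : min |G z.1 z.2| R ≤ R := min_le_right _ _
  gcongr

lemma FR_le_sq (hR0 : 0 ≤ R) (z : E × E) : FR G R z ≤ G z.1 z.2 ^ 2 := by
  unfold FR
  rw [← sq_abs (G z.1 z.2)]
  have h0 : 0 ≤ min |G z.1 z.2| R := le_min (abs_nonneg _) hR0
  have : min |G z.1 z.2| R ≤ |G z.1 z.2| := min_le_left _ _
  gcongr

lemma FR_cont (hG : PairLip G L) (hL : 0 < L) : Continuous (FR G R) :=
  (((hG.cont hL).abs).min continuous_const).pow 2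

lemma FR_meas (hG : PairLip G L) (hL : 0 < L) : Measurable (FR G R) := (FR_cont hG hL).measurable

lemma FR_lip (hG : PairLip G L) (hR0 : 0 ≤ R) (x x' y y' : E) :
    |FR G R (x, y) - FR G R (x', y')| ≤ 2 * R * L * (dist x x' + dist y y') := by
  unfold FR
  simp only
  set u := |G x y|
  set v := |G x' y'|
  have h1 : |u - v| ≤ L * (dist x x' + dist y y') :=
    (abs_abs_sub_abs_le_abs_sub _ _).trans (hG _ _ _ _)
  have h2 : |min u R - min v R| ≤ |u - v| := by
    have := abs_min_sub_min_le_max u R v R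
    simpa using this
  have a0 : 0 ≤ min u R := le_min (abs_nonneg _) hR0
  have b0 : 0 ≤ min v R := le_min (abs_nonneg _) hR0
  have a1 : min u R ≤ R := min_le_right _ _
  have b1 : min v R ≤ R := min_le_right _ _
  rw [sq_sub_sq, abs_mul, abs_of_nonneg (add_nonneg a0 b0)]
  calc _ ≤ (2 * R) * (L * (dist x x' + dist y y')) := by
        apply mul_le_mul (by linarith) (h2.trans h1) (abs_nonneg _) (by linarith)
    _ = _ := by ring

lemma FR_abs_le (hR0 : 0 ≤ R) (z : E × E) : |FR G R z| ≤ R ^ 2 := by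
  rw [abs_of_nonneg (FR_nonneg z)]; exact FR_le hR0 z

variable [IsMarkovKernel π]

lemma hR_meas (hG : PairLip G L) (hL : 0 < L) : Measurable (hR π G R) :=
  ((FR_meas hG hL).stronglyMeasurable.integral_kernel_prod_right').measurable

lemma FR_int (hG : PairLip G L) (hL : 0 < L) (hR0 : 0 ≤ R) (x : E) {ν : Measure E}
    [IsFiniteMeasure ν] : Integrable (fun y => FR G R (x, y)) ν :=
  Integrable.of_bound (C := R ^ 2)
    ((FR_meas hG hL).comp measurable_prodMk_left).aestronglyMeasurable
    (ae_of_all _ fun y => FR_abs_le hR0 _)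

lemma hR_nonneg (x : E) : 0 ≤ hR π G R x := integral_nonneg fun _ => FR_nonneg _

lemma hR_le (hG : PairLip G L) (hL : 0 < L) (hR0 : 0 ≤ R) (x : E) : hR π G R x ≤ R ^ 2 := by
  have := integral_mono (FR_int hG hL hR0 x (ν := π x)) (integrable_const (R ^ 2))
    (fun _ => FR_le hR0 _)
  simpa [hR] using this

lemma hR_lip (h : Gap π γ c) (hG : PairLip G L) (hL : 0 < L) (hR0 : 0 < R) :
    LipR (hR π G R) (2 * R * L * (2 + c)) := by
  intro x x'
  have h1 : |∫ y, FR G R (x, y) ∂(π x) - ∫ y, FR G R (x', y) ∂(π x)| ≤ 2 * R * L * dist x x' := by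
    rw [← integral_sub (FR_int hG hL hR0.le x) (FR_int hG hL hR0.le x')]
    have := norm_integral_le_of_norm_le_const (μ := π x)
      (f := fun y => FR G R (x, y) - FR G R (x', y)) (C := 2 * R * L * dist x x')
      (ae_of_all _ fun y => by
        have := FR_lip hG hR0.le x x' y y
        simpa using this)
    simpa using this
  have h2 : |∫ y, FR G R (x', y) ∂(π x) - ∫ y, FR G R (x', y) ∂(π x')|
      ≤ 2 * R * L * ((1 + c) * dist x x') := by
    have hl : LipR (fun y => FR G R (x', y)) (2 * R * L) := by
      intro y y'
      have := FR_lip hG hR0.le x' x' y y'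
      simpa using this
    have hp : 0 < 2 * R * L := by positivity
    exact (hl.le_wass hp (h.ffm x) (h.ffm x')).trans
      (mul_le_mul_of_nonneg_left (h.wass_kernel x x') hp.le)
  have := abs_sub_le (hR π G R x) (∫ y, FR G R (x', y) ∂(π x)) (hR π G R x')
  unfold hR at *
  linarith

variable {P : Measure (ℕ → E)} {ν μstar : Measure E}

lemma pair_meas (k : ℕ) {n : ℕ} (hk : k + 1 ≤ n) :
    Measurable[natFilt (E := E) n] (fun ω : ℕ → E => (ω k, ω (k + 1))) :=
  (meas_coord n (by omega)).prodMk (meas_coord n hk)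

lemma cov_bound (h : Gap π γ c) (hG : PairLip G L) (hL : 0 < L) (hR0 : 0 < R)
    (hP : IsMarkovChainLaw π ν P) (hs : FiniteFirstMoment μstar)
    (hinv : Pmeas π μstar = μstar) (x₀ : E) {M1 : ℝ}
    (hi : ∀ n, Integrable (fun ω : ℕ → E => dist x₀ (ω n)) P)
    (hM : ∀ n, ∫ ω : ℕ → E, dist x₀ (ω n) ∂P ≤ M1) (k j : ℕ) {m : ℝ}
    (hm : m = ∫ x, hR π G R x ∂μstar) :
    |∫ ω, (FR G R (ω k, ω (k + 1)) - m) * (FR G R (ω (k + 1 + j), ω (k + 1 + j + 1)) - m) ∂P| ≤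
      R ^ 2 * (2 * R * L * (2 + c)) * (1 + c) * (M1 + ∫ y, dist x₀ y ∂μstar) * γ ^ j := by
  have := hP.prob
  have := hs.1
  have hc := h.c0
  have hLp : 0 < 2 * R * L * (2 + c) := by positivity
  have hlip := hR_lip h hG hL hR0
  have m0 : 0 ≤ m := hm ▸ integral_nonneg fun _ => hR_nonneg _
  have m1 : m ≤ R ^ 2 := by
    rw [hm]
    have := integral_mono (hlip.integrable hs) (integrable_const (R ^ 2))
      (fun y => hR_le hG hL hR0.le y)
    simpa using this
  set U : (ℕ → E) → ℝ := fun ω => FR G R (ω k, ω (k + 1)) - m with hUdef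
  have hU : Measurable[natFilt (k + 1)] U :=
    ((FR_meas hG hL).comp (pair_meas k le_rfl)).sub_const m
  have hUm : Measurable U := hU.mono ((natFilt (E := E)).le _) le_rfl
  have hUb : ∀ ω, |U ω| ≤ R ^ 2 := fun ω => by
    have a := FR_nonneg (G := G) (R := R) (ω k, ω (k + 1))
    have b := FR_le (G := G) hR0.le (ω k, ω (k + 1))
    rw [abs_le]; constructor <;> simp only [hUdef] <;> linarith
  have hUi : Integrable U P := Integrable.of_bound hUm.aestronglyMeasurable _ (ae_of_all _ hUb)
  have hU' : Measurable[natFilt (k + 1 + j)] U :=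
    hU.mono ((natFilt (E := E)).mono (Nat.le_add_right _ j)) le_rfl
  have hFm := FR_meas (R := R) hG hL
  have habs : ∀ x, |hR π G R x| ≤ R ^ 2 := fun x => by
    rw [abs_of_nonneg (hR_nonneg x)]; exact hR_le hG hL hR0.le x
  have eA := markov_A hP (k + 1 + j) hU' hUb hFm (FR_abs_le (G := G) hR0.le)
  have eB := markov_B hP (k + 1) j hU hUb (hR_meas (π := π) (R := R) hG hL) habs
  have hit := iter_bound (π := π) (hR_meas (π := π) (R := R) hG hL) habs j
  have i1 : Integrable (fun ω => U ω * FR G R (ω (k + 1 + j), ω (k + 1 + j + 1))) P := by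
    refine Integrable.of_bound (C := R ^ 2 * R ^ 2) ?_ (ae_of_all _ fun ω => ?_)
    · exact (hUm.mul (hFm.comp (by fun_prop))).aestronglyMeasurable
    · rw [Real.norm_eq_abs, abs_mul]
      exact mul_le_mul (hUb ω) (FR_abs_le hR0.le _) (abs_nonneg _) (by positivity)
  have i2 : Integrable (fun ω => U ω * (Pfun π)^[j] (hR π G R) (ω (k + 1))) P := by
    refine Integrable.of_bound (C := R ^ 2 * R ^ 2) ?_ (ae_of_all _ fun ω => ?_)
    · exact (hUm.mul (hit.1.comp (by fun_prop))).aestronglyMeasurable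
    · rw [Real.norm_eq_abs, abs_mul]
      exact mul_le_mul (hUb ω) (hit.2 _) (abs_nonneg _) (by positivity)
  have e : ∫ ω, U ω * (FR G R (ω (k + 1 + j), ω (k + 1 + j + 1)) - m) ∂P =
      ∫ ω, U ω * ((Pfun π)^[j] (hR π G R) (ω (k + 1)) - m) ∂P := by
    simp_rw [mul_sub]
    rw [integral_sub i1 (hUi.mul_const m), integral_sub i2 (hUi.mul_const m), eA]
    congr 1
  rw [e]
  refine abs_integral_le_integral_abs.trans ?_
  set K := 2 * R * L * (2 + c) with hK
  set D := ∫ y, dist x₀ y ∂μstar with hD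
  have hb : ∀ ω : ℕ → E, |U ω * ((Pfun π)^[j] (hR π G R) (ω (k + 1)) - m)| ≤
      R ^ 2 * (K * (1 + c) * γ ^ j) * (dist x₀ (ω (k + 1)) + D) := fun ω => by
    have := h.iter_star hs hinv j hLp hlip x₀ (ω (k + 1))
    rw [← hm] at this
    rw [abs_mul, mul_assoc]
    exact mul_le_mul (hUb ω) this (abs_nonneg _) (by positivity)
  have hγ := h.g0
  calc _ ≤ ∫ ω : ℕ → E, R ^ 2 * (K * (1 + c) * γ ^ j) * (dist x₀ (ω (k + 1)) + D) ∂P := by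
        refine integral_mono_of_nonneg (ae_of_all _ fun _ => abs_nonneg _) ?_ (ae_of_all _ hb)
        exact ((hi (k + 1)).add (integrable_const D)).const_mul _
    _ = R ^ 2 * (K * (1 + c) * γ ^ j) * (∫ ω : ℕ → E, dist x₀ (ω (k + 1)) ∂P + D) := by
        rw [integral_const_mul, integral_add (hi (k + 1)) (integrable_const D)]
        simp
    _ ≤ R ^ 2 * (K * (1 + c) * γ ^ j) * (M1 + D) := by
        have := hM (k + 1)
        gcongr
    _ = _ := by ring

lemma var_bound (h : Gap π γ c) (hG : PairLip G L) (hL : 0 < L) (hR0 : 1 ≤ R)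
    (hP : IsMarkovChainLaw π ν P) (hs : FiniteFirstMoment μstar)
    (hinv : Pmeas π μstar = μstar) (x₀ : E) {M1 : ℝ}
    (hi : ∀ n, Integrable (fun ω : ℕ → E => dist x₀ (ω n)) P)
    (hM : ∀ n, ∫ ω : ℕ → E, dist x₀ (ω n) ∂P ≤ M1) {m : ℝ}
    (hm : m = ∫ x, hR π G R x ∂μstar) (n : ℕ) :
    ∫ ω, (∑ k ∈ Finset.range n, (FR G R (ω k, ω (k + 1)) - m)) ^ 2 ∂P ≤
      n * (R ^ 4 * (1 + 2 * ((2 * L * (2 + c)) * (1 + c) *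
        (M1 + ∫ y, dist x₀ y ∂μstar) * (1 - γ)⁻¹))) := by
  have := hP.prob
  have := hs.1
  have hc := h.c0
  have hR' : 0 < R := by linarith
  have hg1 : 0 < 1 - γ := by linarith [h.g1]
  have hlip := hR_lip h hG hL hR'
  have m0 : 0 ≤ m := hm ▸ integral_nonneg fun _ => hR_nonneg _
  have m1 : m ≤ R ^ 2 := by
    rw [hm]
    have := integral_mono (hlip.integrable hs) (integrable_const (R ^ 2))
      (fun y => hR_le hG hL hR'.le y)
    simpa using this
  set W : ℕ → (ℕ → E) → ℝ := fun k ω => FR G R (ω k, ω (k + 1)) - m with hW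
  have hWm : ∀ k, Measurable (W k) := fun k =>
    ((FR_meas hG hL).comp (by fun_prop)).sub_const m
  have hWb : ∀ k ω, |W k ω| ≤ R ^ 2 := fun k ω => by
    have a := FR_nonneg (G := G) (R := R) (ω k, ω (k + 1))
    have b := FR_le (G := G) hR'.le (ω k, ω (k + 1))
    rw [abs_le]; constructor <;> simp only [hW] <;> linarith
  have hWW : ∀ k l, Integrable (fun ω => W k ω * W l ω) P := fun k l => by
    refine Integrable.of_bound (C := R ^ 2 * R ^ 2)
      ((hWm k).mul (hWm l)).aestronglyMeasurable (ae_of_all _ fun ω => ?_)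
    rw [Real.norm_eq_abs, abs_mul]
    exact mul_le_mul (hWb k ω) (hWb l ω) (abs_nonneg _) (by positivity)
  set D := ∫ y, dist x₀ y ∂μstar with hD
  have hD0 : 0 ≤ D := integral_nonneg fun _ => dist_nonneg
  have hM0 : 0 ≤ M1 := le_trans (integral_nonneg fun _ => dist_nonneg) (hM 0)
  set B := R ^ 2 * (2 * R * L * (2 + c)) * (1 + c) * (M1 + D) with hB
  have hB0 : 0 ≤ B := by positivity
  change ∫ ω, (∑ k ∈ Finset.range n, W k ω) ^ 2 ∂P ≤ _
  have main : ∫ ω, (∑ k ∈ Finset.range n, W k ω) ^ 2 ∂P ≤ n * (R ^ 4 + 2 * (B * (1 - γ)⁻¹)) := by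
    induction n with
    | zero => simp
    | succ n ih =>
      have hSS : Integrable (fun ω => (∑ k ∈ Finset.range n, W k ω) ^ 2) P := by
        simp_rw [sq, Finset.sum_mul_sum]
        exact integrable_finsetSum _ fun i _ => integrable_finsetSum _ fun j _ => hWW i j
      have hSW : Integrable (fun ω => (∑ k ∈ Finset.range n, W k ω) * W n ω) P := by
        simp_rw [Finset.sum_mul]
        exact integrable_finsetSum _ fun i _ => hWW i n
      have hcross : ∫ ω, (∑ k ∈ Finset.range n, W k ω) * W n ω ∂P ≤ B * (1 - γ)⁻¹ := by
        simp_rw [Finset.sum_mul]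
        rw [integral_finsetSum _ fun i _ => hWW i n]
        calc _ ≤ ∑ k ∈ Finset.range n, B * γ ^ (n - 1 - k) := by
              refine Finset.sum_le_sum fun k hk => ?_
              have hk' := Finset.mem_range.1 hk
              have := cov_bound h hG hL hR' hP hs hinv x₀ hi hM k (n - 1 - k) hm
              have e : k + 1 + (n - 1 - k) = n := by omega
              rw [e] at this
              exact (le_abs_self _).trans this
          _ = B * ∑ k ∈ Finset.range n, γ ^ k := by
              rw [← Finset.mul_sum, Finset.sum_range_reflect (fun k => γ ^ k) n]
          _ ≤ B * (1 - γ)⁻¹ := by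
              refine mul_le_mul_of_nonneg_left ?_ hB0
              rw [← tsum_geometric_of_lt_one h.g0.le h.g1]
              exact (summable_geometric_of_lt_one h.g0.le h.g1).sum_le_tsum _
                (fun i _ => pow_nonneg h.g0.le i)
      have hdiag : ∫ ω, W n ω * W n ω ∂P ≤ R ^ 4 := by
        have := integral_mono (hWW n n) (integrable_const (R ^ 4)) (fun ω => by
          have h1 := hWb n ω
          have : W n ω * W n ω = |W n ω| * |W n ω| := (abs_mul_abs_self _).symm
          simp only [this]
          calc _ ≤ R ^ 2 * R ^ 2 := mul_le_mul h1 h1 (abs_nonneg _) (by positivity)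
            _ = _ := by ring)
        simpa using this
      have e : ∫ ω, (∑ k ∈ Finset.range (n + 1), W k ω) ^ 2 ∂P =
          ∫ ω, (∑ k ∈ Finset.range n, W k ω) ^ 2 ∂P +
          2 * ∫ ω, (∑ k ∈ Finset.range n, W k ω) * W n ω ∂P + ∫ ω, W n ω * W n ω ∂P := by
        have hS1 : Integrable (fun ω => (∑ k ∈ Finset.range n, W k ω) ^ 2 +
            2 * ((∑ k ∈ Finset.range n, W k ω) * W n ω)) P := hSS.add (hSW.const_mul 2)
        rw [← integral_const_mul, ← integral_add hSS (hSW.const_mul 2),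
          ← integral_add hS1 (hWW n n)]
        congr 1
        ext ω
        rw [Finset.sum_range_succ]
        ring
      rw [e]
      push_cast
      linarith
  refine main.trans ?_
  refine mul_le_mul_of_nonneg_left ?_ (Nat.cast_nonneg n)
  have e : B = R ^ 3 * (2 * L * (2 + c) * (1 + c) * (M1 + D)) := by rw [hB]; ring
  have h34 : R ^ 3 ≤ R ^ 4 := pow_le_pow_right₀ hR0 (by norm_num)
  set Q := 2 * L * (2 + c) * (1 + c) * (M1 + D) with hQ
  have hQ0 : 0 ≤ Q := by positivity
  have : B * (1 - γ)⁻¹ ≤ R ^ 4 * (Q * (1 - γ)⁻¹) := by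
    rw [e, mul_assoc]
    exact mul_le_mul_of_nonneg_right h34 (by positivity)
  linarith

end core

lemma ae_tendsto_of_summable {Ω : Type*} [MeasurableSpace Ω] {P : Measure Ω} {f : ℕ → Ω → ℝ}
    (hf : ∀ k, Integrable (f k) P) (hs : Summable fun k => ∫ ω, |f k ω| ∂P) :
    ∀ᵐ ω ∂P, Tendsto (fun k => f k ω) atTop (𝓝 0) := by
  have h1 : ∫⁻ ω, ∑' k, ‖f k ω‖ₑ ∂P ≠ ∞ := by
    rw [lintegral_tsum fun k => (hf k).1.enorm]
    have : ∀ k, ∫⁻ ω, ‖f k ω‖ₑ ∂P = ENNReal.ofReal (∫ ω, |f k ω| ∂P) := fun k => by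
      rw [← ofReal_integral_norm_eq_lintegral_enorm (hf k)]; rfl
    simp_rw [this]
    exact hs.tsum_ofReal_ne_top
  have h2 := ae_lt_top' (AEMeasurable.tsum fun k => (hf k).1.enorm) h1
  filter_upwards [h2] with ω hω
  have := ENNReal.tendsto_atTop_zero_of_tsum_ne_top hω.ne
  rw [tendsto_zero_iff_norm_tendsto_zero]
  have := (ENNReal.tendsto_toReal ENNReal.zero_ne_top).comp this
  simpa [Function.comp_def] using this

section fin
variable {π : Kernel E E} {γ c : ℝ} {G : E → E → ℝ} {L R : ℝ} [IsMarkovKernel π]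
  {P : Measure (ℕ → E)} {ν μstar : Measure E}

lemma m_bound (h : Gap π γ c) (hG : PairLip G L) (hL : 0 < L) (hR0 : 0 < R)
    (hP : IsMarkovChainLaw π ν P) (hs : FiniteFirstMoment μstar)
    (hinv : Pmeas π μstar = μstar) (x₀ : E) {M2 : ℝ}
    (hi : ∀ n, Integrable (fun ω : ℕ → E => dist x₀ (ω n)) P)
    (hGi : ∀ n, Integrable (fun ω : ℕ → E => G (ω n) (ω (n + 1)) ^ 2) P)
    (hGM : ∀ n, ∫ ω : ℕ → E, G (ω n) (ω (n + 1)) ^ 2 ∂P ≤ M2) :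
    ∫ x, hR π G R x ∂μstar ≤ M2 := by
  have := hP.prob
  have := hs.1
  have hc := h.c0
  set m := ∫ x, hR π G R x ∂μstar with hm
  set D := ∫ y, dist x₀ y ∂μstar with hD
  have hLp : 0 < 2 * R * L * (2 + c) := by positivity
  have hlip := hR_lip h hG hL hR0
  set K := 2 * R * L * (2 + c) with hK
  have habs : ∀ x, |hR π G R x| ≤ R ^ 2 := fun x => by
    rw [abs_of_nonneg (hR_nonneg x)]; exact hR_le hG hL hR0.le x
  have key : ∀ n : ℕ, m ≤ M2 + K * (1 + c) * γ ^ n * (∫ ω : ℕ → E, dist x₀ (ω 0) ∂P + D) := by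
    intro n
    have eA := markov_A hP n (U := fun _ => 1) measurable_const (B := 1) (by simp)
      (FR_meas (R := R) hG hL) (FR_abs_le (G := G) hR0.le)
    have eB := markov_B hP 0 n (U := fun _ => 1) measurable_const (B := 1) (by simp)
      (hR_meas (π := π) (R := R) hG hL) habs
    have hit := iter_bound (π := π) (hR_meas (π := π) (R := R) hG hL) habs n
    simp only [one_mul, zero_add] at eA eB
    have i0 : Integrable (fun ω : ℕ → E => FR G R (ω n, ω (n + 1))) P :=
      Integrable.of_bound (C := R ^ 2)
        ((FR_meas (R := R) hG hL).comp (by fun_prop)).aestronglyMeasurable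
        (ae_of_all _ fun ω => FR_abs_le hR0.le _)
    have i1 : Integrable (fun ω : ℕ → E => (Pfun π)^[n] (hR π G R) (ω 0)) P :=
      Integrable.of_bound (C := R ^ 2) (hit.1.comp (by fun_prop)).aestronglyMeasurable
        (ae_of_all _ fun ω => hit.2 _)
    have e : ∫ ω : ℕ → E, FR G R (ω n, ω (n + 1)) ∂P =
        ∫ ω : ℕ → E, (Pfun π)^[n] (hR π G R) (ω 0) ∂P := by
      rw [eA, ← eB]; rfl
    have l1 : ∫ ω : ℕ → E, FR G R (ω n, ω (n + 1)) ∂P ≤ M2 :=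
      (integral_mono i0 (hGi n) fun ω => FR_le_sq hR0.le _).trans (hGM n)
    have l2 : ∫ _ω : ℕ → E, m ∂P ≤ ∫ ω : ℕ → E, ((Pfun π)^[n] (hR π G R) (ω 0) +
        K * (1 + c) * γ ^ n * (dist x₀ (ω 0) + D)) ∂P := by
      refine integral_mono (integrable_const m)
        (i1.add (((hi 0).add (integrable_const D)).const_mul _)) fun ω => ?_
      have := h.iter_star hs hinv n hLp hlip x₀ (ω 0)
      rw [abs_le] at this
      simp only
      linarith [this.1]
    have e3 : ∫ ω : ℕ → E, (dist x₀ (ω 0) + D) ∂P = ∫ ω : ℕ → E, dist x₀ (ω 0) ∂P + D := by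
      rw [integral_add (hi 0) (integrable_const D)]; simp
    have i2 : Integrable (fun ω : ℕ → E => K * (1 + c) * γ ^ n * (dist x₀ (ω 0) + D)) P :=
      ((hi 0).add (integrable_const D)).const_mul _
    rw [integral_add i1 i2, ← e] at l2
    simp only [Pi.add_apply, integral_const_mul, integral_const, probReal_univ, one_smul] at l2
    rw [e3] at l2
    linarith
  have lim : Tendsto (fun n : ℕ => M2 + K * (1 + c) * γ ^ n *
      (∫ ω : ℕ → E, dist x₀ (ω 0) ∂P + D)) atTop (𝓝 (M2 + K * (1 + c) * 0 *
      (∫ ω : ℕ → E, dist x₀ (ω 0) ∂P + D))) :=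
    (((tendsto_pow_atTop_nhds_zero_of_lt_one h.g0.le h.g1).const_mul _).mul_const _).const_add _
  simp only [mul_zero, zero_mul, add_zero] at lim
  exact ge_of_tendsto' lim key

lemma m_star {Pstar : Measure (ℕ → E)} (hG : PairLip G L) (hL : 0 < L) (hR0 : 0 < R)
    (hPs : IsMarkovChainLaw π μstar Pstar) :
    ∫ ω, FR G R (ω 0, ω 1) ∂Pstar = ∫ x, hR π G R x ∂μstar := by
  have eA := markov_A hPs 0 (U := fun _ => 1) measurable_const (B := 1) (by simp)
      (FR_meas (R := R) hG hL) (FR_abs_le (G := G) hR0.le)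
  simp only [one_mul, zero_add] at eA
  rw [eA]
  conv_rhs => rw [← hPs.init]
  rw [integral_map (measurable_pi_apply 0).aemeasurable
    (hR_meas hG hL).aestronglyMeasurable]
  rfl

lemma FR_tendsto (r : ℕ → ℝ) (hr : Tendsto r atTop atTop) (z : E × E) :
    Tendsto (fun k => FR G (r k) z) atTop (𝓝 (G z.1 z.2 ^ 2)) := by
  apply tendsto_const_nhds.congr'
  filter_upwards [hr.eventually_ge_atTop |G z.1 z.2|] with k hk
  unfold FR
  rw [min_eq_left hk, sq_abs]

lemma m_tendsto {Pstar : Measure (ℕ → E)} (hG : PairLip G L) (hL : 0 < L)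
    (hPs : IsMarkovChainLaw π μstar Pstar) {M2 : ℝ}
    (hb : ∀ R, 0 < R → ∫ x, hR π G R x ∂μstar ≤ M2)
    (r : ℕ → ℝ) (hr0 : ∀ k, 0 < r k) (hr : Tendsto r atTop atTop) :
    Tendsto (fun k => ∫ x, hR π G (r k) x ∂μstar) atTop
      (𝓝 (∫ ω, G (ω 0) (ω 1) ^ 2 ∂Pstar)) := by
  have := hPs.prob
  have hFm : ∀ k, Measurable (fun ω : ℕ → E => FR G (r k) (ω 0, ω 1)) := fun k =>
    (FR_meas (R := r k) hG hL).comp (by fun_prop)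
  have hGm : Measurable (fun ω : ℕ → E => G (ω 0) (ω 1) ^ 2) :=
    ((hG.cont hL).measurable.comp (f := fun ω : ℕ → E => (ω 0, ω 1)) (by fun_prop)).pow_const 2
  have hFi : ∀ k, Integrable (fun ω : ℕ → E => FR G (r k) (ω 0, ω 1)) Pstar := fun k =>
    Integrable.of_bound (C := r k ^ 2) (hFm k).aestronglyMeasurable
      (ae_of_all _ fun ω => FR_abs_le (hr0 k).le _)
  have hGi : Integrable (fun ω : ℕ → E => G (ω 0) (ω 1) ^ 2) Pstar := by
    refine ⟨hGm.aestronglyMeasurable, ?_⟩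
    have h1 : ∀ ω : ℕ → E, ‖G (ω 0) (ω 1) ^ 2‖ₑ =
        liminf (fun k => ‖FR G (r k) (ω 0, ω 1)‖ₑ) atTop := fun ω =>
      ((FR_tendsto r hr (ω 0, ω 1)).enorm.liminf_eq).symm
    rw [hasFiniteIntegral_iff_enorm]
    simp_rw [h1]
    refine (lintegral_liminf_le fun k => (hFm k).enorm).trans_lt ?_
    have h2 : ∀ k, ∫⁻ ω, ‖FR G (r k) (ω 0, ω 1)‖ₑ ∂Pstar ≤ ENNReal.ofReal M2 := fun k => by
      rw [← ofReal_integral_norm_eq_lintegral_enorm (hFi k)]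
      apply ENNReal.ofReal_le_ofReal
      have : ∀ ω : ℕ → E, ‖FR G (r k) (ω 0, ω 1)‖ = FR G (r k) (ω 0, ω 1) := fun ω => by
        rw [Real.norm_eq_abs, abs_of_nonneg (FR_nonneg _)]
      simp_rw [this]
      rw [m_star hG hL (hr0 k) hPs]
      exact hb _ (hr0 k)
    refine lt_of_le_of_lt ?_ (ENNReal.ofReal_lt_top (r := M2))
    exact liminf_le_of_frequently_le' (Frequently.of_forall h2)
  have e : (fun k => ∫ x, hR π G (r k) x ∂μstar) =
      fun k => ∫ ω, FR G (r k) (ω 0, ω 1) ∂Pstar := by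
    ext k; rw [m_star hG hL (hr0 k) hPs]
  rw [e]
  refine tendsto_integral_of_dominated_convergence (fun ω => G (ω 0) (ω 1) ^ 2)
    (fun k => (hFm k).aestronglyMeasurable) hGi (fun k => ae_of_all _ fun ω => ?_)
    (ae_of_all _ fun ω => FR_tendsto r hr (ω 0, ω 1))
  rw [Real.norm_eq_abs, abs_of_nonneg (FR_nonneg _)]
  exact FR_le_sq (hr0 k).le (ω 0, ω 1)

lemma tail_pt {z R δ : ℝ} (hR : 1 ≤ R) (hδ : 0 < δ) :
    z ^ 2 - (min |z| R) ^ 2 ≤ R ^ (-δ) * |z| ^ (2 + δ) := by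
  have hR0 : 0 < R := by linarith
  rcases le_total |z| R with h | h
  · rw [min_eq_left h, sq_abs, sub_self]; positivity
  · have hz : 0 < |z| := by linarith
    have e : |z| ^ (2 + δ) = z ^ 2 * |z| ^ δ := by
      rw [Real.rpow_add hz, Real.rpow_two, sq_abs]
    have h1 : R ^ δ ≤ |z| ^ δ := Real.rpow_le_rpow hR0.le h hδ.le
    have hp : 0 < R ^ δ := Real.rpow_pos_of_pos hR0 _
    have h2 : 1 ≤ R ^ (-δ) * |z| ^ δ := by
      rw [Real.rpow_neg hR0.le, inv_mul_eq_div, le_div_iff₀ hp, one_mul]; exact h1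
    rw [e]
    have h3 : 0 ≤ z ^ 2 := sq_nonneg z
    have h4 : 0 ≤ (min |z| R) ^ 2 := sq_nonneg _
    nlinarith

lemma L1_bound (h : Gap π γ c) (hG : PairLip G L) (hL : 0 < L) (hR0 : 1 ≤ R)
    (hP : IsMarkovChainLaw π ν P) {δ : ℝ} (hδ : 0 < δ) {M2 C m : ℝ}
    (hGi : ∀ n, Integrable (fun ω : ℕ → E => G (ω n) (ω (n + 1)) ^ 2) P)
    (hGpi : ∀ n, Integrable (fun ω : ℕ → E => |G (ω n) (ω (n + 1))| ^ (2 + δ)) P)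
    (hGM : ∀ n, ∫ ω : ℕ → E, |G (ω n) (ω (n + 1))| ^ (2 + δ) ∂P ≤ M2) (n : ℕ) (hn : 0 < n)
    (hv : ∫ ω, (∑ k ∈ Finset.range n, (FR G R (ω k, ω (k + 1)) - m)) ^ 2 ∂P ≤ n * (R ^ 4 * C)) :
    ∫ ω : ℕ → E, |(∑ k ∈ Finset.range n, G (ω k) (ω (k + 1)) ^ 2) / n - m| ∂P ≤
      (C + 1) * (R ^ 2 / √n) + M2 * R ^ (-δ) := by
  have := hP.prob
  have hR' : 0 < R := by linarith
  have hn' : (0 : ℝ) < n := by exact_mod_cast hn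
  have hsn : 0 < √(n : ℝ) := Real.sqrt_pos.2 hn'
  have hFi : ∀ k, Integrable (fun ω : ℕ → E => FR G R (ω k, ω (k + 1))) P := fun k =>
    Integrable.of_bound (C := R ^ 2)
      ((FR_meas (R := R) hG hL).comp (by fun_prop)).aestronglyMeasurable
      (ae_of_all _ fun ω => FR_abs_le hR'.le _)
  set S : (ℕ → E) → ℝ := fun ω => ∑ k ∈ Finset.range n, (FR G R (ω k, ω (k + 1)) - m) with hS
  have hSb : ∀ ω, ‖S ω ^ 2‖ ≤ (n * (R ^ 2 + |m|)) ^ 2 := fun ω => by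
    rw [norm_pow, Real.norm_eq_abs]
    have : |S ω| ≤ n * (R ^ 2 + |m|) := by
      refine (Finset.abs_sum_le_sum_abs _ _).trans ?_
      refine (Finset.sum_le_card_nsmul _ _ (R ^ 2 + |m|) fun k _ => ?_).trans
        (by rw [Finset.card_range, nsmul_eq_mul])
      exact (abs_sub _ _).trans (by gcongr; exact FR_abs_le hR'.le _)
    gcongr
  have hSi : Integrable S P :=
    integrable_finsetSum _ fun k _ => (hFi k).sub (integrable_const m)
  have hS2 : Integrable (fun ω => S ω ^ 2) P :=
    Integrable.of_bound (hSi.1.pow 2) _ (ae_of_all _ hSb)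
  set t := √(n : ℝ) * R ^ 2 with ht
  have ht0 : 0 < t := by positivity
  have pt : ∀ ω : ℕ → E, |(∑ k ∈ Finset.range n, G (ω k) (ω (k + 1)) ^ 2) / n - m| ≤
      (S ω ^ 2 / t + t) / n +
        (∑ k ∈ Finset.range n, R ^ (-δ) * |G (ω k) (ω (k + 1))| ^ (2 + δ)) / n := by
    intro ω
    have e : (∑ k ∈ Finset.range n, G (ω k) (ω (k + 1)) ^ 2) / n - m =
        S ω / n + (∑ k ∈ Finset.range n,
          (G (ω k) (ω (k + 1)) ^ 2 - FR G R (ω k, ω (k + 1)))) / n := by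
      simp only [hS, Finset.sum_sub_distrib, Finset.sum_const, Finset.card_range, nsmul_eq_mul]
      field_simp
      ring
    rw [e]
    refine (abs_add_le _ _).trans (add_le_add ?_ ?_)
    · rw [abs_div, abs_of_pos hn']
      refine div_le_div_of_nonneg_right ?_ hn'.le
      rw [← sq_abs (S ω)]
      have h0 : 0 ≤ |S ω| := abs_nonneg _
      rw [← sub_nonneg]
      have : |S ω| ^ 2 / t + t - |S ω| = ((|S ω| - t) ^ 2 + |S ω| * t) / t := by
        field_simp; ring
      rw [this]
      positivity
    · have hnn : ∀ k, 0 ≤ G (ω k) (ω (k + 1)) ^ 2 - FR G R (ω k, ω (k + 1)) := fun k =>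
        sub_nonneg.2 (FR_le_sq hR'.le (ω k, ω (k + 1)))
      rw [abs_of_nonneg (div_nonneg (Finset.sum_nonneg fun k _ => hnn k) hn'.le)]
      refine div_le_div_of_nonneg_right (Finset.sum_le_sum fun k _ => ?_) hn'.le
      exact tail_pt hR0 hδ
  have i1 : Integrable (fun ω => (S ω ^ 2 / t + t) / n) P :=
    ((hS2.div_const t).add (integrable_const t)).div_const _
  have i2 : Integrable (fun ω : ℕ → E =>
      (∑ k ∈ Finset.range n, R ^ (-δ) * |G (ω k) (ω (k + 1))| ^ (2 + δ)) / n) P :=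
    (integrable_finsetSum _ fun k _ => (hGpi k).const_mul _).div_const _
  refine (integral_mono_of_nonneg (ae_of_all _ fun _ => abs_nonneg _) (i1.add i2)
    (ae_of_all _ pt)).trans ?_
  have e1 : ∫ ω, (S ω ^ 2 / t + t) / n ∂P = ((∫ ω, S ω ^ 2 ∂P) / t + t) / n := by
    rw [integral_div, integral_add (hS2.div_const t) (integrable_const t), integral_div]
    simp
  have e2 : ∫ ω : ℕ → E,
      (∑ k ∈ Finset.range n, R ^ (-δ) * |G (ω k) (ω (k + 1))| ^ (2 + δ)) / n ∂P ≤
      M2 * R ^ (-δ) := by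
    rw [integral_div, integral_finsetSum _ fun k _ => (hGpi k).const_mul _, div_le_iff₀ hn']
    refine (Finset.sum_le_card_nsmul _ _ (M2 * R ^ (-δ)) fun k _ => ?_).trans (by
      simp [mul_comm])
    rw [integral_const_mul, mul_comm]
    have := hGM k
    have : 0 < R ^ (-δ) := Real.rpow_pos_of_pos hR' _
    gcongr
  have e3 : ∫ ω, (S ω ^ 2 / t + t) / n ∂P ≤ (C + 1) * (R ^ 2 / √n) := by
    rw [e1]
    have hsq : √(n : ℝ) * √(n : ℝ) = n := Real.mul_self_sqrt hn'.le
    calc _ ≤ (n * (R ^ 4 * C) / t + t) / n := by gcongr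
      _ = _ := by
        rw [ht]
        generalize √(n : ℝ) = s at *
        rw [← hsq]
        field_simp
  rw [integral_add' i1 i2]
  exact add_le_add e3 e2

end fin


section last
variable {π : Kernel E E} {γ c : ℝ} {G : E → E → ℝ} {L : ℝ} [IsMarkovKernel π]
  {P Pstar : Measure (ℕ → E)} {ν μstar : Measure E}

lemma subseq_conv (h : Gap π γ c) (hG : PairLip G L) (hL : 0 < L)
    (hP : IsMarkovChainLaw π ν P) (hs : FiniteFirstMoment μstar)
    (hinv : Pmeas π μstar = μstar) (hPs : IsMarkovChainLaw π μstar Pstar)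
    (x₀ : E) {δ : ℝ} (hδ : 0 < δ) {M1 M2 M3 : ℝ}
    (hi : ∀ n, Integrable (fun ω : ℕ → E => dist x₀ (ω n)) P)
    (hM : ∀ n, ∫ ω : ℕ → E, dist x₀ (ω n) ∂P ≤ M1)
    (hGi : ∀ n, Integrable (fun ω : ℕ → E => G (ω n) (ω (n + 1)) ^ 2) P)
    (hGM2 : ∀ n, ∫ ω : ℕ → E, G (ω n) (ω (n + 1)) ^ 2 ∂P ≤ M3)
    (hGpi : ∀ n, Integrable (fun ω : ℕ → E => |G (ω n) (ω (n + 1))| ^ (2 + δ)) P)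
    (hGM : ∀ n, ∫ ω : ℕ → E, |G (ω n) (ω (n + 1))| ^ (2 + δ) ∂P ≤ M2)
    {a : ℝ} (ha : 1 < a) :
    ∀ᵐ ω ∂P, Tendsto (fun k : ℕ => (∑ i ∈ Finset.range ⌊a ^ k⌋₊, G (ω i) (ω (i + 1)) ^ 2) /
      (⌊a ^ k⌋₊ : ℝ)) atTop (𝓝 (∫ ω, G (ω 0) (ω 1) ^ 2 ∂Pstar)) := by
  have := hP.prob
  have := hs.1
  have hc := h.c0
  obtain ⟨q, hq1, hqa⟩ : ∃ q : ℝ, 1 < q ∧ q ^ 8 = a := by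
    refine ⟨a ^ (1 / 8 : ℝ), Real.one_lt_rpow ha (by norm_num), ?_⟩
    rw [← Real.rpow_natCast, ← Real.rpow_mul (by linarith)]
    norm_num
  have hq0 : 0 < q := by linarith
  have ha0 : 0 < a := by linarith
  set N : ℕ → ℕ := fun k => ⌊a ^ k⌋₊ with hN
  have hN0 : ∀ k, 0 < N k := fun k => Nat.floor_pos.2 (one_le_pow₀ ha.le)
  set r : ℕ → ℝ := fun k => q ^ k with hr
  have hr1 : ∀ k, 1 ≤ r k := fun k => one_le_pow₀ hq1.le
  have hr0 : ∀ k, 0 < r k := fun k => by positivity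
  have hrt : Tendsto r atTop atTop := tendsto_pow_atTop_atTop_of_one_lt hq1
  set C := 1 + 2 * ((2 * L * (2 + c)) * (1 + c) *
        (M1 + ∫ y, dist x₀ y ∂μstar) * (1 - γ)⁻¹) with hC
  have hM1 : 0 ≤ M1 := le_trans (integral_nonneg fun _ => dist_nonneg) (hM 0)
  have hD : 0 ≤ ∫ y, dist x₀ y ∂μstar := integral_nonneg fun _ => dist_nonneg
  have hC0 : 0 ≤ C := by
    have : 0 < 1 - γ := by linarith [h.g1]
    positivity
  set m : ℕ → ℝ := fun k => ∫ x, hR π G (r k) x ∂μstar with hm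
  set f : ℕ → (ℕ → E) → ℝ := fun k ω =>
    (∑ i ∈ Finset.range (N k), G (ω i) (ω (i + 1)) ^ 2) / (N k : ℝ) - m k with hf
  have hfi : ∀ k, Integrable (f k) P := fun k =>
    ((integrable_finsetSum _ fun i _ => hGi i).div_const _).sub (integrable_const _)
  set b := 1 - a⁻¹ with hb
  have hb0 : 0 < b := by
    have : a⁻¹ < 1 := inv_lt_one_of_one_lt₀ ha
    linarith
  have hbound : ∀ k, ∫ ω, |f k ω| ∂P ≤
      (C + 1) * ((√b)⁻¹ * ((q ^ 2)⁻¹) ^ k) + M2 * (q ^ (-δ)) ^ k := by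
    intro k
    have h1 := L1_bound h hG hL (hr1 k) hP hδ hGi hGpi hGM (N k) (hN0 k)
      (var_bound h hG hL (hr1 k) hP hs hinv x₀ hi hM (m := m k) rfl (N k))
    refine h1.trans ?_
    have e1 : r k ^ (-δ) = (q ^ (-δ)) ^ k := by
      simp only [hr]
      rw [← Real.rpow_natCast, ← Real.rpow_natCast, ← Real.rpow_mul hq0.le,
        ← Real.rpow_mul hq0.le, mul_comm]
    rw [e1]
    have hNk : b * a ^ k ≤ (N k : ℝ) := mul_pow_le_nat_floor_pow ha k
    have e2 : √b * (q ^ 4) ^ k ≤ √(N k : ℝ) := by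
      apply Real.le_sqrt_of_sq_le
      rw [mul_pow, Real.sq_sqrt hb0.le]
      refine le_trans (le_of_eq ?_) hNk
      rw [← hqa]; ring
    have hsb : 0 < √b := Real.sqrt_pos.2 hb0
    have e3 : r k ^ 2 / √(N k : ℝ) ≤ (√b)⁻¹ * ((q ^ 2)⁻¹) ^ k := by
      calc r k ^ 2 / √(N k : ℝ) ≤ r k ^ 2 / (√b * (q ^ 4) ^ k) := by
            gcongr
        _ = _ := by
            simp only [hr]
            rw [inv_pow, ← pow_mul, ← pow_mul, ← pow_mul]
            field_simp
            ring
    have hC1 : 0 ≤ C + 1 := by linarith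
    exact add_le_add (mul_le_mul_of_nonneg_left e3 hC1) le_rfl
  have hsum : Summable fun k => ∫ ω, |f k ω| ∂P := by
    refine Summable.of_nonneg_of_le (fun k => integral_nonneg fun _ => abs_nonneg _) hbound ?_
    refine Summable.add (Summable.mul_left _ (Summable.mul_left _ ?_)) (Summable.mul_left _ ?_)
    · exact summable_geometric_of_lt_one (by positivity)
        (inv_lt_one_of_one_lt₀ (one_lt_pow₀ hq1 (by norm_num)))
    · exact summable_geometric_of_lt_one (by positivity)
        (Real.rpow_lt_one_of_one_lt_of_neg hq1 (by linarith))
  have hmt := m_tendsto hG hL hPs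
    (fun R hR0 => m_bound h hG hL hR0 hP hs hinv x₀ hi hGi hGM2) r hr0 hrt
  filter_upwards [ae_tendsto_of_summable hfi hsum] with ω hω
  have := hω.add hmt
  simpa [hf, hm] using this

lemma main_conv (h : Gap π γ c) (hG : PairLip G L) (hL : 0 < L)
    (hP : IsMarkovChainLaw π ν P) (hs : FiniteFirstMoment μstar)
    (hinv : Pmeas π μstar = μstar) (hPs : IsMarkovChainLaw π μstar Pstar)
    (x₀ : E) {δ : ℝ} (hδ : 0 < δ) {M1 M2 M3 : ℝ}
    (hi : ∀ n, Integrable (fun ω : ℕ → E => dist x₀ (ω n)) P)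
    (hM : ∀ n, ∫ ω : ℕ → E, dist x₀ (ω n) ∂P ≤ M1)
    (hGi : ∀ n, Integrable (fun ω : ℕ → E => G (ω n) (ω (n + 1)) ^ 2) P)
    (hGM2 : ∀ n, ∫ ω : ℕ → E, G (ω n) (ω (n + 1)) ^ 2 ∂P ≤ M3)
    (hGpi : ∀ n, Integrable (fun ω : ℕ → E => |G (ω n) (ω (n + 1))| ^ (2 + δ)) P)
    (hGM : ∀ n, ∫ ω : ℕ → E, |G (ω n) (ω (n + 1))| ^ (2 + δ) ∂P ≤ M2) :
    ∀ᵐ ω ∂P, Tendsto (fun n : ℕ => (∑ i ∈ Finset.range n, G (ω i) (ω (i + 1)) ^ 2) /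
      (n : ℝ)) atTop (𝓝 (∫ ω, G (ω 0) (ω 1) ^ 2 ∂Pstar)) := by
  have hall : ∀ᵐ ω ∂P, ∀ j : ℕ, Tendsto (fun k : ℕ =>
      (∑ i ∈ Finset.range ⌊(1 + 1 / ((j : ℝ) + 1)) ^ k⌋₊, G (ω i) (ω (i + 1)) ^ 2) /
      (⌊(1 + 1 / ((j : ℝ) + 1)) ^ k⌋₊ : ℝ)) atTop (𝓝 (∫ ω, G (ω 0) (ω 1) ^ 2 ∂Pstar)) := by
    rw [ae_all_iff]
    intro j
    refine subseq_conv h hG hL hP hs hinv hPs x₀ hδ hi hM hGi hGM2 hGpi hGM ?_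
    have : (0 : ℝ) < 1 / ((j : ℝ) + 1) := by positivity
    linarith
  filter_upwards [hall] with ω hω
  refine tendsto_div_of_monotone_of_tendsto_div_floor_pow
    (fun n => ∑ i ∈ Finset.range n, G (ω i) (ω (i + 1)) ^ 2) _ ?_
    (fun j => 1 + 1 / ((j : ℝ) + 1)) ?_ ?_ hω
  · intro n n' hn
    exact Finset.sum_le_sum_of_subset_of_nonneg (Finset.range_mono hn) fun _ _ _ => sq_nonneg _
  · intro j
    have : (0 : ℝ) < 1 / ((j : ℝ) + 1) := by positivity
    linarith
  · simpa using (tendsto_one_div_add_atTop_nhds_zero_nat (𝕜 := ℝ)).const_add 1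

lemma pow_le_one_add_rpow {z p : ℝ} (n : ℕ) (hz : 0 ≤ z) (hp : (n : ℝ) ≤ p) :
    z ^ n ≤ 1 + z ^ p := by
  have hzp : 0 ≤ z ^ p := Real.rpow_nonneg hz _
  rcases le_total z 1 with h | h
  · have : z ^ n ≤ 1 := pow_le_one₀ hz h
    linarith
  · have : z ^ n ≤ z ^ p := by
      rw [← Real.rpow_natCast]; exact Real.rpow_le_rpow_of_exponent_le h hp
    linarith

lemma three_rpow {u v w p : ℝ} (hu : 0 ≤ u) (hv : 0 ≤ v) (hw : 0 ≤ w) (hp : 0 ≤ p) :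
    (u + v + w) ^ p ≤ 3 ^ p * (u ^ p + v ^ p + w ^ p) := by
  have hup : 0 ≤ u ^ p := Real.rpow_nonneg hu _
  have hvp : 0 ≤ v ^ p := Real.rpow_nonneg hv _
  have hwp : 0 ≤ w ^ p := Real.rpow_nonneg hw _
  have h3 : (0 : ℝ) ≤ 3 ^ p := Real.rpow_nonneg (by norm_num) _
  have key : ∀ s, 0 ≤ s → u ≤ s → v ≤ s → w ≤ s → s ^ p ≤ u ^ p + v ^ p + w ^ p →
      (u + v + w) ^ p ≤ 3 ^ p * (u ^ p + v ^ p + w ^ p) := by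
    intro s hs h1 h2 h4 h5
    calc (u + v + w) ^ p ≤ (3 * s) ^ p :=
          Real.rpow_le_rpow (by positivity) (by linarith) hp
      _ = 3 ^ p * s ^ p := Real.mul_rpow (by norm_num) hs
      _ ≤ _ := mul_le_mul_of_nonneg_left h5 h3
  rcases le_total u v with h1 | h1 <;> rcases le_total v w with h2 | h2 <;>
    rcases le_total u w with h4 | h4
  all_goals first
    | exact key u hu (by linarith) (by linarith) (by linarith) (by linarith)
    | exact key v hv (by linarith) (by linarith) (by linarith) (by linarith)
    | exact key w hw (by linarith) (by linarith) (by linarith) (by linarith)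

end last
/-- Lemma 2: `(1/n) ∑_{l=1}^n Z_l² → σ²` `P_μ`-almost surely. -/
theorem lemma2_as_convergence_of_squares
    {E : Type*} [MeasurableSpace E] [MetricSpace E] [CompleteSpace E]
    [SecondCountableTopology E] [BorelSpace E]
    (π : Kernel E E) [IsMarkovKernel π] (γ c : ℝ) (hγ : γ ∈ Set.Ioo (0 : ℝ) 1) (hc : 0 < c)
    -- (H0): the Feller property
    (hH0 : ∀ f : E → ℝ, Continuous f → IsBounded (Set.range f) → Continuous (Pfun π f))
    -- (H1): `P` preserves `M_{1,1}`
    (hH1 : ∀ ν : MeasureTheory.Measure E, FiniteFirstMoment ν → FiniteFirstMoment (Pmeas π ν))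
    -- (H2): spectral gap in the Wasserstein metric
    (hH2 : ∀ n : ℕ, 1 ≤ n → ∀ ν₁ ν₂ : MeasureTheory.Measure E, FiniteFirstMoment ν₁ →
      FiniteFirstMoment ν₂ →
      wassDist ((Pmeas π)^[n] ν₁) ((Pmeas π)^[n] ν₂) ≤ c * γ ^ n * wassDist ν₁ ν₂)
    -- the chain: initial distribution `μ ∈ M_{1,1}` and its law `Pμ` on `E^ℕ`
    (μ : MeasureTheory.Measure E) (hμ : FiniteFirstMoment μ)
    (Pμ : MeasureTheory.Measure (ℕ → E)) (hPμ : IsMarkovChainLaw π μ Pμ)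
    -- (H3): uniformly bounded moments of order `2 + δ`
    (x₀ : E) (δ : ℝ) (hδ : 0 < δ)
    (hH3int : ∀ n : ℕ, Integrable (fun ω : ℕ → E => dist x₀ (ω n) ^ (2 + δ)) Pμ)
    (hH3 : ∃ M : ℝ, ∀ n : ℕ, ∫ ω : ℕ → E, dist x₀ (ω n) ^ (2 + δ) ∂Pμ ≤ M)
    -- the unique invariant measure `μ* ∈ M_{1,1}`
    (μstar : MeasureTheory.Measure E) (hμstar : FiniteFirstMoment μstar)
    (hinv : Pmeas π μstar = μstar)
    (huniq : ∀ ν : MeasureTheory.Measure E, IsProbabilityMeasure ν → Pmeas π ν = ν → ν = μstar)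
    -- `ψ` is Lipschitz with `⟨ψ, μ*⟩ = 0`
    (ψ : E → ℝ) (Lψ : ℝ≥0) (hψ : LipschitzWith Lψ ψ) (hψ0 : ∫ x, ψ x ∂μstar = 0)
    -- the law of the stationary chain, used to define `σ² = E_{μ*} Z₁²`
    (Pstar : MeasureTheory.Measure (ℕ → E)) (hPstar : IsMarkovChainLaw π μstar Pstar) :
    ∀ᵐ ω ∂Pμ, Tendsto
      (fun n : ℕ => (1 / (n : ℝ)) * ∑ l ∈ Finset.Icc 1 n, (ZFun π ψ l ω) ^ 2)
      atTop (𝓝 (∫ ω', (ZFun π ψ 1 ω') ^ 2 ∂Pstar)) := by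
  obtain ⟨M, hM⟩ := hH3
  have := hPμ.prob
  have hgap : Gap π γ c := ⟨hγ.1, hγ.2, hc, hH1, hH2⟩
  have hLp : (0 : ℝ) < (Lψ : ℝ) + 1 := by positivity
  have hlψ : LipR ψ ((Lψ : ℝ) + 1) := fun x y => by
    have := hψ.dist_le_mul x y
    rw [Real.dist_eq] at this
    nlinarith [dist_nonneg (x := x) (y := y)]
  obtain ⟨L', hL', hχ⟩ := hgap.chi hμstar hinv hLp hlψ hψ0
  set G : E → E → ℝ := fun x y => chiFun π ψ y - chiFun π ψ x + ψ y with hGdef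
  set L := L' + ((Lψ : ℝ) + 1) with hLdef
  have hL : 0 < L := by positivity
  have hG : PairLip G L := by
    intro x x' y y'
    have h1 := hχ y y'
    have h2 := hχ x x'
    have h3 := hlψ y y'
    have e : G x y - G x' y' = (chiFun π ψ y - chiFun π ψ y') - (chiFun π ψ x - chiFun π ψ x')
        + (ψ y - ψ y') := by simp only [hGdef]; ring
    rw [e]
    refine (abs_add_le _ _).trans ((add_le_add (abs_sub _ _) le_rfl).trans ?_)
    have d : 0 ≤ dist x x' := dist_nonneg
    nlinarith
  set p := 2 + δ with hp
  have hdm : ∀ n, Measurable (fun ω : ℕ → E => dist x₀ (ω n)) := fun n =>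
    measurable_const.dist (measurable_pi_apply n)
  have hi : ∀ n, Integrable (fun ω : ℕ → E => dist x₀ (ω n)) Pμ := fun n => by
    refine ((integrable_const (1 : ℝ)).add (hH3int n)).mono' (hdm n).aestronglyMeasurable
      (ae_of_all _ fun ω => ?_)
    rw [Real.norm_eq_abs, abs_of_nonneg dist_nonneg]
    have := pow_le_one_add_rpow 1 (dist_nonneg (x := x₀) (y := ω n)) (p := p)
      (by rw [hp]; push_cast; linarith)
    simpa using this
  have hM1 : ∀ n, ∫ ω : ℕ → E, dist x₀ (ω n) ∂Pμ ≤ 1 + M := fun n => by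
    have h1 : ∫ ω : ℕ → E, dist x₀ (ω n) ∂Pμ ≤ ∫ ω : ℕ → E, (1 + dist x₀ (ω n) ^ p) ∂Pμ := by
      refine integral_mono (hi n) ((integrable_const (1 : ℝ)).add (hH3int n)) fun ω => ?_
      have := pow_le_one_add_rpow 1 (dist_nonneg (x := x₀) (y := ω n)) (p := p)
        (by rw [hp]; push_cast; linarith)
      simpa using this
    rw [integral_add (integrable_const (1 : ℝ)) (hH3int n)] at h1
    simp only [integral_const, probReal_univ, one_smul] at h1
    linarith [hM n]
  have hGm : ∀ n, Measurable (fun ω : ℕ → E => G (ω n) (ω (n + 1))) := fun n =>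
    (hG.cont hL).measurable.comp (f := fun ω : ℕ → E => (ω n, ω (n + 1))) (by fun_prop)
  have hp0 : 0 ≤ p := by rw [hp]; linarith
  have hpt : ∀ n (ω : ℕ → E), |G (ω n) (ω (n + 1))| ^ p ≤
      3 ^ p * (|G x₀ x₀| ^ p + L ^ p * dist x₀ (ω n) ^ p + L ^ p * dist x₀ (ω (n + 1)) ^ p) := by
    intro n ω
    rw [← Real.mul_rpow hL.le dist_nonneg, ← Real.mul_rpow hL.le dist_nonneg]
    refine le_trans ?_ (three_rpow (abs_nonneg _) (mul_nonneg hL.le dist_nonneg)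
      (mul_nonneg hL.le dist_nonneg) hp0)
    refine Real.rpow_le_rpow (abs_nonneg _) ?_ hp0
    have h1 := hG x₀ (ω n) x₀ (ω (n + 1))
    have h2 := abs_sub_abs_le_abs_sub (G (ω n) (ω (n + 1))) (G x₀ x₀)
    rw [abs_sub_comm] at h2
    linarith
  have hbi : ∀ n, Integrable (fun ω : ℕ → E => 3 ^ p * (|G x₀ x₀| ^ p +
      L ^ p * dist x₀ (ω n) ^ p + L ^ p * dist x₀ (ω (n + 1)) ^ p)) Pμ := fun n =>
    (((integrable_const _).add ((hH3int n).const_mul _)).add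
      ((hH3int (n + 1)).const_mul _)).const_mul _
  have hGpi : ∀ n, Integrable (fun ω : ℕ → E => |G (ω n) (ω (n + 1))| ^ p) Pμ := fun n => by
    refine (hbi n).mono' ((hGm n).abs.pow_const p).aestronglyMeasurable (ae_of_all _ fun ω => ?_)
    rw [Real.norm_eq_abs, abs_of_nonneg (by positivity)]
    exact hpt n ω
  have hGM : ∀ n, ∫ ω : ℕ → E, |G (ω n) (ω (n + 1))| ^ p ∂Pμ ≤
      3 ^ p * (|G x₀ x₀| ^ p + L ^ p * M + L ^ p * M) := fun n => by
    refine (integral_mono (hGpi n) (hbi n) (hpt n)).trans ?_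
    have j1 : Integrable (fun ω : ℕ → E => L ^ p * dist x₀ (ω n) ^ p) Pμ :=
      (hH3int n).const_mul _
    have j2 : Integrable (fun ω : ℕ → E => L ^ p * dist x₀ (ω (n + 1)) ^ p) Pμ :=
      (hH3int (n + 1)).const_mul _
    have j3 : Integrable (fun ω : ℕ → E => |G x₀ x₀| ^ p + L ^ p * dist x₀ (ω n) ^ p) Pμ :=
      (integrable_const _).add j1
    rw [integral_const_mul, integral_add j3 j2, integral_add (integrable_const _) j1,
      integral_const_mul, integral_const_mul]
    simp only [integral_const, probReal_univ, one_smul]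
    have := hM n
    have := hM (n + 1)
    gcongr
  have hsqpt : ∀ n (ω : ℕ → E), G (ω n) (ω (n + 1)) ^ 2 ≤ 1 + |G (ω n) (ω (n + 1))| ^ p := by
    intro n ω
    rw [← sq_abs]
    exact pow_le_one_add_rpow 2 (abs_nonneg _) (by rw [hp]; push_cast; linarith)
  have hGi : ∀ n, Integrable (fun ω : ℕ → E => G (ω n) (ω (n + 1)) ^ 2) Pμ := fun n => by
    refine ((integrable_const (1 : ℝ)).add (hGpi n)).mono'
      ((hGm n).pow_const 2).aestronglyMeasurable (ae_of_all _ fun ω => ?_)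
    rw [Real.norm_eq_abs, abs_of_nonneg (sq_nonneg _)]
    exact hsqpt n ω
  have hGM2 : ∀ n, ∫ ω : ℕ → E, G (ω n) (ω (n + 1)) ^ 2 ∂Pμ ≤
      1 + 3 ^ p * (|G x₀ x₀| ^ p + L ^ p * M + L ^ p * M) := fun n => by
    refine (integral_mono (hGi n) ((integrable_const (1 : ℝ)).add (hGpi n)) (hsqpt n)).trans ?_
    rw [integral_add' (integrable_const (1 : ℝ)) (hGpi n)]
    simp only [integral_const, probReal_univ, one_smul]
    linarith [hGM n]
  filter_upwards [main_conv hgap hG hL hPμ hμstar hinv hPstar x₀ hδ hi hM1 hGi hGM2 hGpi hGM]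
    with ω hω
  have e : ∀ n : ℕ, ∑ l ∈ Finset.Icc 1 n, (ZFun π ψ l ω) ^ 2 =
      ∑ i ∈ Finset.range n, G (ω i) (ω (i + 1)) ^ 2 := by
    intro n
    induction n with
    | zero => simp
    | succ n ih =>
      rw [Finset.sum_Icc_succ_top (by omega), ih, Finset.sum_range_succ]
      rfl
  have e2 : (fun n : ℕ => (1 / (n : ℝ)) * ∑ l ∈ Finset.Icc 1 n, (ZFun π ψ l ω) ^ 2) =
      fun n : ℕ => (∑ i ∈ Finset.range n, G (ω i) (ω (i + 1)) ^ 2) / (n : ℝ) := by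
    ext n
    rw [e n, one_div, inv_mul_eq_div]
  rw [e2]
  exact hω
end

section
/- Under hypotheses (H0)–(H3), if ψ: E→ℝ is Lipschitz with ⟨ψ,μ*⟩=0, then E_{μ*} Z_1² < ∞, i.e. σ² := E_{μ*}[(χ(X_1) − χ(X_0) + ψ(X_1))²] is finite when the chain is started from the invariant measure μ*. -/
open MeasureTheory ProbabilityTheory Filter Bornology
open scoped ENNReal NNReal Topology

variable {E : Type*} [MeasurableSpace E] [MetricSpace E] [CompleteSpace E]
  [SecondCountableTopology E] [BorelSpace E]

section Helpers

variable {F : Type*} [MeasurableSpace F] [MetricSpace F] [CompleteSpace F]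
  [SecondCountableTopology F] [BorelSpace F]

lemma aux_lip_integrable {ν : Measure F} (hν : FiniteFirstMoment ν) {f : F → ℝ} {L : ℝ≥0}
    (hf : LipschitzWith L f) : Integrable f ν := by
  obtain ⟨hp, x₀, hx⟩ := hν
  refine Integrable.mono' ((integrable_const |f x₀|).add (hx.const_mul (L : ℝ)))
    hf.continuous.measurable.aestronglyMeasurable (Eventually.of_forall fun x => ?_)
  have h := hf.dist_le_mul x₀ x
  rw [Real.dist_eq, abs_sub_comm] at h
  have h2 : |f x| ≤ |f x₀| + |f x - f x₀| := by
    have := abs_add_le (f x₀) (f x - f x₀); simpa using this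
  simp only [Pi.add_apply, Real.norm_eq_abs]
  linarith

lemma aux_bdd {ν₁ ν₂ : Measure F} (h₁ : FiniteFirstMoment ν₁) (h₂ : FiniteFirstMoment ν₂) :
    BddAbove {r : ℝ | ∃ f : F → ℝ, LipschitzWith 1 f ∧
      r = |∫ x, f x ∂ν₁ - ∫ x, f x ∂ν₂|} := by
  have h₁' := h₁
  have h₂' := h₂
  obtain ⟨hp₁, x₀, -⟩ := h₁
  obtain ⟨hp₂, -⟩ := h₂
  have hd : LipschitzWith 1 (fun x : F => dist x₀ x) := LipschitzWith.dist_right x₀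
  refine ⟨∫ x, dist x₀ x ∂ν₁ + ∫ x, dist x₀ x ∂ν₂, ?_⟩
  rintro r ⟨f, hf, rfl⟩
  have key : ∀ ν : Measure F, FiniteFirstMoment ν →
      |∫ x, f x ∂ν - f x₀| ≤ ∫ x, dist x₀ x ∂ν := by
    intro ν hν
    have := hν.1
    have e : ∫ x, f x ∂ν - f x₀ = ∫ x, (f x - f x₀) ∂ν := by
      rw [integral_sub (aux_lip_integrable hν hf) (integrable_const _)]; simp
    rw [e, ← Real.norm_eq_abs]
    refine norm_integral_le_of_norm_le (aux_lip_integrable hν hd)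
      (Eventually.of_forall fun x => ?_)
    have h := hf.dist_le_mul x x₀
    rw [Real.dist_eq, dist_comm] at h
    simpa using h
  have a := key ν₁ h₁'
  have b := key ν₂ h₂'
  rw [abs_le] at *
  constructor <;> linarith [a.1, a.2, b.1, b.2]

lemma aux_wass {ν₁ ν₂ : Measure F} (h₁ : FiniteFirstMoment ν₁) (h₂ : FiniteFirstMoment ν₂)
    {f : F → ℝ} {L : ℝ≥0} (hf : LipschitzWith L f) (hL : 0 < L) :
    |∫ x, f x ∂ν₁ - ∫ x, f x ∂ν₂| ≤ L * wassDist ν₁ ν₂ := by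
  have hL' : (0 : ℝ) < L := hL
  have hg : LipschitzWith 1 (fun x => (L : ℝ)⁻¹ * f x) := by
    refine LipschitzWith.of_dist_le_mul fun x y => ?_
    have h := hf.dist_le_mul x y
    rw [Real.dist_eq] at *
    rw [← mul_sub, abs_mul, abs_of_pos (inv_pos.2 hL')]
    rw [inv_mul_le_iff₀ hL']
    simpa using h
  have h := le_csSup (aux_bdd h₁ h₂) ⟨_, hg, rfl⟩
  rw [integral_const_mul, integral_const_mul, ← mul_sub, abs_mul, abs_of_pos (inv_pos.2 hL'),
    inv_mul_le_iff₀ hL'] at h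
  exact h

lemma aux_dirac_ffm (x : F) : FiniteFirstMoment (Measure.dirac x) :=
  ⟨inferInstance, x, by
    refine ⟨(measurable_const.dist measurable_id).aestronglyMeasurable, ?_⟩
    rw [hasFiniteIntegral_iff_norm, lintegral_dirac]
    exact ENNReal.ofReal_lt_top⟩

lemma aux_wass_dirac (x y : F) : wassDist (Measure.dirac x) (Measure.dirac y) ≤ dist x y := by
  refine Real.sSup_le ?_ dist_nonneg
  rintro r ⟨f, hf, rfl⟩
  rw [integral_dirac, integral_dirac, ← Real.dist_eq]
  simpa using hf.dist_le_mul x y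

lemma aux_iter_ffm {π : Kernel F F}
    (hH1 : ∀ ν : Measure F, FiniteFirstMoment ν → FiniteFirstMoment (Pmeas π ν))
    (n : ℕ) {ν : Measure F} (hν : FiniteFirstMoment ν) :
    FiniteFirstMoment ((Pmeas π)^[n] ν) := by
  induction n with
  | zero => exact hν
  | succ n ih => rw [Function.iterate_succ_apply']; exact hH1 _ ih

lemma aux_Pmeas_dirac (π : Kernel F F) (x : F) : Pmeas π (Measure.dirac x) = π x := by
  unfold Pmeas
  rw [Measure.dirac_bind π.measurable]

lemma aux_Pfun_lip {π : Kernel F F} {γ c : ℝ} (hγ : γ ∈ Set.Ioo (0 : ℝ) 1) (hc : 0 < c)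
    (hH1 : ∀ ν : Measure F, FiniteFirstMoment ν → FiniteFirstMoment (Pmeas π ν))
    (hH2 : ∀ n : ℕ, 1 ≤ n → ∀ ν₁ ν₂ : Measure F, FiniteFirstMoment ν₁ →
      FiniteFirstMoment ν₂ →
      wassDist ((Pmeas π)^[n] ν₁) ((Pmeas π)^[n] ν₂) ≤ c * γ ^ n * wassDist ν₁ ν₂)
    {f : F → ℝ} {L : ℝ≥0} (hf : LipschitzWith L f) : ∃ K : ℝ≥0, LipschitzWith K (Pfun π f) := by
  have hf' : LipschitzWith (L + 1) f := hf.weaken (by simp)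
  have hK : 0 ≤ ((L + 1 : ℝ≥0) : ℝ) * (c * γ) := by have := hγ.1; positivity
  refine ⟨Real.toNNReal (((L + 1 : ℝ≥0) : ℝ) * (c * γ)), LipschitzWith.of_dist_le_mul fun x y => ?_⟩
  rw [Real.coe_toNNReal _ hK]
  have h := aux_wass (hH1 _ (aux_dirac_ffm x)) (hH1 _ (aux_dirac_ffm y)) hf' (by positivity)
  have h2 := hH2 1 le_rfl _ _ (aux_dirac_ffm x) (aux_dirac_ffm y)
  have h3 := aux_wass_dirac x y
  simp only [Function.iterate_one, pow_one] at h2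
  have h4 : wassDist (Pmeas π (Measure.dirac x)) (Pmeas π (Measure.dirac y))
      ≤ c * γ * dist x y :=
    h2.trans (mul_le_mul_of_nonneg_left h3 (mul_pos hc hγ.1).le)
  have h5 := h.trans (mul_le_mul_of_nonneg_left h4 (L + 1 : ℝ≥0).2)
  rw [aux_Pmeas_dirac, aux_Pmeas_dirac] at h5
  rw [Real.dist_eq, mul_assoc]
  exact h5

lemma aux_integral_Pmeas {π : Kernel F F} [IsMarkovKernel π] {ν : Measure F} {f : F → ℝ}
    [SFinite ν]
    (hf : Integrable f (Pmeas π ν)) : ∫ x, f x ∂(Pmeas π ν) = ∫ x, Pfun π f x ∂ν := by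
  unfold Pmeas Pfun at *
  have h := Kernel.integral_comp (η := π) (κ := Kernel.const Unit ν) (a := ()) (f := f)
    (by rw [Kernel.comp_apply, Kernel.const_apply]; exact hf)
  rw [Kernel.comp_apply, Kernel.const_apply] at h
  exact h

lemma aux_integral_iter {π : Kernel F F} [IsMarkovKernel π] {γ c : ℝ}
    (hγ : γ ∈ Set.Ioo (0 : ℝ) 1) (hc : 0 < c)
    (hH1 : ∀ ν : Measure F, FiniteFirstMoment ν → FiniteFirstMoment (Pmeas π ν))
    (hH2 : ∀ n : ℕ, 1 ≤ n → ∀ ν₁ ν₂ : Measure F, FiniteFirstMoment ν₁ →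
      FiniteFirstMoment ν₂ →
      wassDist ((Pmeas π)^[n] ν₁) ((Pmeas π)^[n] ν₂) ≤ c * γ ^ n * wassDist ν₁ ν₂)
    {ν : Measure F} (hν : FiniteFirstMoment ν) (n : ℕ) :
    ∀ {f : F → ℝ} {L : ℝ≥0}, LipschitzWith L f →
      ∫ x, f x ∂((Pmeas π)^[n] ν) = ∫ x, (Pfun π)^[n] f x ∂ν := by
  induction n with
  | zero => intros; rfl
  | succ n ih =>
    intro f L hf
    obtain ⟨K, hK⟩ := aux_Pfun_lip hγ hc hH1 hH2 hf
    have hn := aux_iter_ffm hH1 n hν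
    have := hn.1
    rw [Function.iterate_succ_apply', Function.iterate_succ_apply,
      aux_integral_Pmeas (aux_lip_integrable (hH1 _ hn) hf), ih hK]

lemma aux_marginal {π : Kernel F F} [IsMarkovKernel π] {ν : Measure F}
    {P : Measure (ℕ → F)} (h : IsMarkovChainLaw π ν P) (n : ℕ) :
    P.map (fun ω => ω n) = (Pmeas π)^[n] ν := by
  have := h.prob
  induction n with
  | zero => exact h.init
  | succ n ih =>
    rw [Function.iterate_succ_apply', ← ih]
    have : IsProbabilityMeasure (P.map (fun ω => ω n)) :=
      Measure.isProbabilityMeasure_map (measurable_pi_apply n).aemeasurable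
    ext s hs
    have hm := h.markov n (s.indicator (fun _ => (1 : ℝ))) (measurable_const.indicator hs)
      ((Metric.isBounded_Icc (0 : ℝ) 1).subset (by
        rintro _ ⟨x, rfl⟩
        by_cases hx : x ∈ s <;> simp [hx]))
    have h1 := integral_condExp (μ := P) (f := fun ω : ℕ → F =>
      s.indicator (fun _ => (1 : ℝ)) (ω (n + 1))) ((natFilt (E := F)).le n)
    rw [integral_congr_ae hm] at h1
    have e1 : (fun ω : ℕ → F => s.indicator (fun _ => (1 : ℝ)) (ω (n + 1)))
        = ((fun ω : ℕ → F => ω (n + 1)) ⁻¹' s).indicator 1 := by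
      ext ω; rfl
    rw [e1, integral_indicator_one (measurable_pi_apply (n+1) hs)] at h1
    have e2 : ∀ x : F, ∫ y, s.indicator (fun _ => (1 : ℝ)) y ∂(π x) = (π x).real s := fun x => 
      integral_indicator_one hs
    simp_rw [e2] at h1
    rw [Measure.map_apply (measurable_pi_apply (n+1)) hs]
    unfold Pmeas
    rw [Measure.bind_apply hs π.measurable.aemeasurable,
      lintegral_map (π.measurable_coe hs) (measurable_pi_apply n)]
    have hmeas : Measurable fun ω : ℕ → F => (π (ω n)) s :=
      (π.measurable_coe hs).comp (measurable_pi_apply n)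
    have h2 : ∫ ω, ((π (ω n)) s).toReal ∂P = (∫⁻ ω, (π (ω n)) s ∂P).toReal :=
      integral_toReal hmeas.aemeasurable (Eventually.of_forall fun ω => measure_lt_top _ _)
    simp only [Measure.real] at h1
    rw [h2] at h1
    refine ((ENNReal.toReal_eq_toReal_iff' ?_ (measure_ne_top _ _)).1 h1).symm
    refine ((lintegral_mono (g := fun _ => 1) fun ω => prob_le_one).trans_lt ?_).ne
    simp

lemma aux_chi_lip {π : Kernel F F} [IsMarkovKernel π] {γ c : ℝ}
    (hγ : γ ∈ Set.Ioo (0 : ℝ) 1) (hc : 0 < c)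
    (hH1 : ∀ ν : Measure F, FiniteFirstMoment ν → FiniteFirstMoment (Pmeas π ν))
    (hH2 : ∀ n : ℕ, 1 ≤ n → ∀ ν₁ ν₂ : Measure F, FiniteFirstMoment ν₁ →
      FiniteFirstMoment ν₂ →
      wassDist ((Pmeas π)^[n] ν₁) ((Pmeas π)^[n] ν₂) ≤ c * γ ^ n * wassDist ν₁ ν₂)
    {μs : Measure F} (hμs : FiniteFirstMoment μs) (hinv : Pmeas π μs = μs)
    {ψ : F → ℝ} {L : ℝ≥0} (hψ : LipschitzWith L ψ) (hψ0 : ∫ x, ψ x ∂μs = 0) :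
    ∃ K : ℝ≥0, LipschitzWith K (chiFun π ψ) := by
  have hγ0 := hγ.1
  have hψ' : LipschitzWith (L + 1) ψ := hψ.weaken (by simp)
  have hit : ∀ n x, (Pfun π)^[n] ψ x = ∫ y, ψ y ∂((Pmeas π)^[n] (Measure.dirac x)) := by
    intro n x
    rw [aux_integral_iter hγ hc hH1 hH2 (aux_dirac_ffm x) n hψ, integral_dirac]
  have hinvn : ∀ n, (Pmeas π)^[n] μs = μs := fun n => Function.iterate_fixed hinv n
  have hb : ∀ n, 1 ≤ n → ∀ ν₁ ν₂ : Measure F, FiniteFirstMoment ν₁ → FiniteFirstMoment ν₂ →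
      |∫ y, ψ y ∂((Pmeas π)^[n] ν₁) - ∫ y, ψ y ∂((Pmeas π)^[n] ν₂)| ≤
        (L + 1) * (c * γ ^ n * wassDist ν₁ ν₂) := by
    intro n hn ν₁ ν₂ h₁ h₂
    have h := aux_wass (aux_iter_ffm hH1 n h₁) (aux_iter_ffm hH1 n h₂) hψ' (by positivity)
    refine h.trans ?_
    push_cast
    exact mul_le_mul_of_nonneg_left (hH2 n hn _ _ h₁ h₂) (by positivity)
  have hgeo : Summable fun n : ℕ => γ ^ (n + 1) :=
    (summable_nat_add_iff 1).2 (summable_geometric_of_lt_one hγ0.le hγ.2)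
  have hsum1 : ∀ x, Summable fun n => (Pfun π)^[n + 1] ψ x := by
    intro x
    refine Summable.of_norm_bounded
      (g := fun n => ((L + 1) * c * wassDist (Measure.dirac x) μs) * γ ^ (n + 1))
      (hgeo.mul_left _) fun n => ?_
    have h := hb (n + 1) (by omega) _ _ (aux_dirac_ffm x) hμs
    rw [hinvn, hψ0, sub_zero, ← hit] at h
    rw [Real.norm_eq_abs]
    exact h.trans (le_of_eq (by ring))
  have hchi : ∀ x, chiFun π ψ x = ψ x + ∑' n, (Pfun π)^[n + 1] ψ x := by
    intro x
    have hs : Summable fun n => (Pfun π)^[n] ψ x :=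
      (summable_nat_add_iff (f := fun n => (Pfun π)^[n] ψ x) 1).1 (hsum1 x)
    have h0 := hs.tsum_eq_zero_add
    simp only [Function.iterate_zero, id] at h0
    exact h0
  have hK : 0 ≤ ((L : ℝ) + 1) * c * ∑' n : ℕ, γ ^ (n + 1) :=
    mul_nonneg (by positivity) (tsum_nonneg fun n => by positivity)
  have hlip2 : LipschitzWith (Real.toNNReal (((L : ℝ) + 1) * c * ∑' n : ℕ, γ ^ (n + 1))) fun x => ∑' n, (Pfun π)^[n + 1] ψ x := by
    refine LipschitzWith.of_dist_le_mul fun x y => ?_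
    rw [Real.dist_eq, ← (hsum1 x).tsum_sub (hsum1 y), Real.coe_toNNReal _ hK, ← Real.norm_eq_abs]
    refine tsum_of_norm_bounded
      (g := fun n => ((L + 1) * c) * γ ^ (n + 1) * dist x y)
      ((hgeo.hasSum.mul_left _).mul_right _) fun n => ?_
    have h := hb (n + 1) (by omega) _ _ (aux_dirac_ffm x) (aux_dirac_ffm y)
    rw [← hit, ← hit] at h
    rw [Real.norm_eq_abs]
    refine h.trans ?_
    have : c * γ ^ (n + 1) * wassDist (Measure.dirac x) (Measure.dirac y) ≤
      c * γ ^ (n + 1) * dist x y :=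
      mul_le_mul_of_nonneg_left (aux_wass_dirac x y) (by positivity)
    calc _ ≤ ((L : ℝ) + 1) * (c * γ ^ (n + 1) * dist x y) :=
          mul_le_mul_of_nonneg_left this (by positivity)
      _ = _ := by ring
  have hfin := hψ.add hlip2
  rw [← show chiFun π ψ = fun x => ψ x + ∑' n, (Pfun π)^[n + 1] ψ x from funext hchi] at hfin
  exact ⟨_, hfin⟩

lemma aux_second_moment {π : Kernel F F} [IsMarkovKernel π] {γ c : ℝ}
    (hγ : γ ∈ Set.Ioo (0 : ℝ) 1)
    (hH1 : ∀ ν : Measure F, FiniteFirstMoment ν → FiniteFirstMoment (Pmeas π ν))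
    (hH2 : ∀ n : ℕ, 1 ≤ n → ∀ ν₁ ν₂ : Measure F, FiniteFirstMoment ν₁ →
      FiniteFirstMoment ν₂ →
      wassDist ((Pmeas π)^[n] ν₁) ((Pmeas π)^[n] ν₂) ≤ c * γ ^ n * wassDist ν₁ ν₂)
    {μ μs : Measure F} (hμ : FiniteFirstMoment μ)
    (hμs : FiniteFirstMoment μs) (hinv : Pmeas π μs = μs) (x₀ : F) (M : ℝ)
    (hM : ∀ (n : ℕ) (k : ℕ), ∫ x, (min (dist x₀ x) k) ^ 2 ∂((Pmeas π)^[n] μ) ≤ M) :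
    MemLp (fun x => dist x₀ x) 2 μs := by
  have := hμs.1
  have hlipk : ∀ k : ℕ, LipschitzWith (2 * k + 1) fun x : F => (min (dist x₀ x) k) ^ 2 := by
    intro k
    refine LipschitzWith.of_dist_le_mul fun x y => ?_
    have h1 : LipschitzWith 1 fun x : F => min (dist x₀ x) (k : ℝ) :=
      (LipschitzWith.dist_right x₀).min_const _
    have h := h1.dist_le_mul x y
    rw [Real.dist_eq] at *
    have ha : 0 ≤ min (dist x₀ x) (k : ℝ) := le_min dist_nonneg (by positivity)
    have hb : 0 ≤ min (dist x₀ y) (k : ℝ) := le_min dist_nonneg (by positivity)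
    have ha' : min (dist x₀ x) (k : ℝ) ≤ k := min_le_right _ _
    have hb' : min (dist x₀ y) (k : ℝ) ≤ k := min_le_right _ _
    set a := min (dist x₀ x) (k : ℝ)
    set b := min (dist x₀ y) (k : ℝ)
    rw [show a ^ 2 - b ^ 2 = (a + b) * (a - b) by ring, abs_mul, abs_of_nonneg (add_nonneg ha hb)]
    push_cast at *
    rw [one_mul] at h
    exact mul_le_mul (by linarith) h (abs_nonneg _) (by positivity)
  have hinvn : ∀ n, (Pmeas π)^[n] μs = μs := fun n => Function.iterate_fixed hinv n
  have hk : ∀ k : ℕ, ∫ x, (min (dist x₀ x) k) ^ 2 ∂μs ≤ M := by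
    intro k
    have hlim : Tendsto (fun n : ℕ => M + (2 * k + 1) * (c * γ ^ (n + 1) * wassDist μ μs)) atTop
        (𝓝 (M + (2 * k + 1) * (c * 0 * wassDist μ μs))) := by
      have := (tendsto_pow_atTop_nhds_zero_of_lt_one hγ.1.le hγ.2).comp (tendsto_add_atTop_nat 1)
      exact (((this.const_mul c).mul_const _).const_mul _).const_add _
    simp only [mul_zero, zero_mul, add_zero] at hlim
    refine ge_of_tendsto' hlim fun n => ?_
    have h := aux_wass (aux_iter_ffm hH1 (n + 1) hμ) (aux_iter_ffm hH1 (n + 1) hμs)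
      (hlipk k) (by positivity)
    have h2 := mul_le_mul_of_nonneg_left (hH2 (n + 1) (by omega) _ _ hμ hμs)
      (show (0 : ℝ) ≤ 2 * k + 1 by positivity)
    push_cast at h
    have h3 := (abs_le.1 (h.trans h2)).1
    rw [hinvn] at h3
    linarith [hM (n + 1) k]
  have hmd : Measurable fun x : F => dist x₀ x := measurable_const.dist measurable_id
  rw [memLp_two_iff_integrable_sq hmd.aestronglyMeasurable]
  refine ⟨(hmd.pow_const 2).aestronglyMeasurable, ?_⟩
  rw [hasFiniteIntegral_iff_ofReal (Eventually.of_forall fun x => by positivity)]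
  have hle : ∫⁻ x, ENNReal.ofReal (dist x₀ x ^ 2) ∂μs ≤ ENNReal.ofReal M := by
    have hF : ∫⁻ x, ENNReal.ofReal (dist x₀ x ^ 2) ∂μs ≤
        liminf (fun k : ℕ => ∫⁻ x, ENNReal.ofReal ((min (dist x₀ x) k) ^ 2) ∂μs) atTop := by
      refine le_trans (lintegral_mono fun x => ?_) (lintegral_liminf_le fun k =>
        ((hmd.min measurable_const).pow_const 2).ennreal_ofReal)
      refine (Tendsto.liminf_eq (tendsto_const_nhds.congr' ?_)).ge
      filter_upwards [eventually_ge_atTop ⌈dist x₀ x⌉₊] with k hk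
      rw [min_eq_left (Nat.ceil_le.1 hk)]
    refine hF.trans (liminf_le_of_le (by isBoundedDefault) fun b hb => ?_)
    obtain ⟨k, hk'⟩ := hb.exists
    refine hk'.trans ?_
    rw [← ofReal_integral_eq_lintegral_ofReal (aux_lip_integrable hμs (hlipk k))
      (Eventually.of_forall fun x => by positivity)]
    exact ENNReal.ofReal_le_ofReal (hk k)
  exact hle.trans_lt ENNReal.ofReal_lt_top

lemma aux_lip_memLp {μs : Measure F} [IsProbabilityMeasure μs] {x₀ : F}
    (h : MemLp (fun x => dist x₀ x) 2 μs) {f : F → ℝ} {L : ℝ≥0} (hf : LipschitzWith L f) :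
    MemLp f 2 μs := by
  refine MemLp.of_le ((memLp_const |f x₀|).add (h.const_mul (L : ℝ)))
    hf.continuous.measurable.aestronglyMeasurable (Eventually.of_forall fun x => ?_)
  have h := hf.dist_le_mul x₀ x
  rw [Real.dist_eq, abs_sub_comm] at h
  have h2 : |f x| ≤ |f x₀| + |f x - f x₀| := by
    have := abs_add_le (f x₀) (f x - f x₀); simpa using this
  simp only [Pi.add_apply, Real.norm_eq_abs]
  exact le_trans (by linarith) (le_abs_self _)

end Helpers

/-- `E_{μ*} Z₁² < ∞`: the variance `σ²` is finite for the stationary chain. -/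
theorem variance_finite_for_stationary_chain
    {E : Type*} [MeasurableSpace E] [MetricSpace E] [CompleteSpace E]
    [SecondCountableTopology E] [BorelSpace E]
    (π : Kernel E E) [IsMarkovKernel π] (γ c : ℝ) (hγ : γ ∈ Set.Ioo (0 : ℝ) 1) (hc : 0 < c)
    -- (H0): the Feller property
    (hH0 : ∀ f : E → ℝ, Continuous f → IsBounded (Set.range f) → Continuous (Pfun π f))
    -- (H1): `P` preserves `M_{1,1}`
    (hH1 : ∀ ν : MeasureTheory.Measure E, FiniteFirstMoment ν → FiniteFirstMoment (Pmeas π ν))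
    -- (H2): spectral gap in the Wasserstein metric
    (hH2 : ∀ n : ℕ, 1 ≤ n → ∀ ν₁ ν₂ : MeasureTheory.Measure E, FiniteFirstMoment ν₁ →
      FiniteFirstMoment ν₂ →
      wassDist ((Pmeas π)^[n] ν₁) ((Pmeas π)^[n] ν₂) ≤ c * γ ^ n * wassDist ν₁ ν₂)
    -- the chain: initial distribution `μ ∈ M_{1,1}` and its law `Pμ` on `E^ℕ`
    (μ : MeasureTheory.Measure E) (hμ : FiniteFirstMoment μ)
    (Pμ : MeasureTheory.Measure (ℕ → E)) (hPμ : IsMarkovChainLaw π μ Pμ)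
    -- (H3): uniformly bounded moments of order `2 + δ`
    (x₀ : E) (δ : ℝ) (hδ : 0 < δ)
    (hH3int : ∀ n : ℕ, Integrable (fun ω : ℕ → E => dist x₀ (ω n) ^ (2 + δ)) Pμ)
    (hH3 : ∃ M : ℝ, ∀ n : ℕ, ∫ ω : ℕ → E, dist x₀ (ω n) ^ (2 + δ) ∂Pμ ≤ M)
    -- the unique invariant measure `μ* ∈ M_{1,1}`
    (μstar : MeasureTheory.Measure E) (hμstar : FiniteFirstMoment μstar)
    (hinv : Pmeas π μstar = μstar)
    (huniq : ∀ ν : MeasureTheory.Measure E, IsProbabilityMeasure ν → Pmeas π ν = ν → ν = μstar)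
    -- `ψ` is Lipschitz with `⟨ψ, μ*⟩ = 0`
    (ψ : E → ℝ) (Lψ : ℝ≥0) (hψ : LipschitzWith Lψ ψ) (hψ0 : ∫ x, ψ x ∂μstar = 0)
    -- the law of the stationary chain, used to define `σ² = E_{μ*} Z₁²`
    (Pstar : MeasureTheory.Measure (ℕ → E)) (hPstar : IsMarkovChainLaw π μstar Pstar) :
    Integrable (fun ω => (ZFun π ψ 1 ω) ^ 2) Pstar := by
  obtain ⟨M, hM⟩ := hH3
  have hprob := hPμ.prob
  have hsm : MemLp (fun x => dist x₀ x) 2 μstar := by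
    refine aux_second_moment (c := c) hγ hH1 hH2 hμ hμstar hinv x₀ (1 + M) fun n k => ?_
    have hmd : Measurable fun x : E => dist x₀ x := measurable_const.dist measurable_id
    rw [← aux_marginal hPμ n, integral_map (measurable_pi_apply n).aemeasurable
      ((hmd.min measurable_const).pow_const 2).aestronglyMeasurable]
    have e : ∫ ω : ℕ → E, (1 + dist x₀ (ω n) ^ (2 + δ)) ∂Pμ ≤ 1 + M := by
      rw [integral_add (integrable_const _) (hH3int n)]
      simpa using hM n
    refine le_trans (integral_mono_of_nonneg (Eventually.of_forall fun ω => by positivity)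
      ((integrable_const _).add (hH3int n)) (Eventually.of_forall fun ω => ?_)) e
    have hd : 0 ≤ dist x₀ (ω n) := dist_nonneg
    have h1 : min (dist x₀ (ω n)) (k : ℝ) ^ 2 ≤ dist x₀ (ω n) ^ 2 :=
      pow_le_pow_left₀ (le_min hd (by positivity)) (min_le_left _ _) 2
    refine h1.trans ?_
    simp only [Pi.add_apply]
    rcases le_total (dist x₀ (ω n)) 1 with h | h
    · have : dist x₀ (ω n) ^ 2 ≤ 1 := pow_le_one₀ hd h
      have := Real.rpow_nonneg hd (2 + δ)
      linarith
    · have := Real.rpow_le_rpow_of_exponent_le h (show (2 : ℝ) ≤ 2 + δ by linarith)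
      rw [Real.rpow_two] at this
      linarith
  obtain ⟨K, hK⟩ := aux_chi_lip hγ hc hH1 hH2 hμstar hinv hψ hψ0
  have := hμstar.1
  have hχ := aux_lip_memLp hsm hK
  have hψ2 := aux_lip_memLp hsm hψ
  have m0 := aux_marginal hPstar 0
  have m1 := aux_marginal hPstar 1
  rw [Function.iterate_fixed hinv] at m0 m1
  have p0 : MeasurePreserving (fun ω : ℕ → E => ω 0) Pstar μstar := ⟨measurable_pi_apply 0, m0⟩
  have p1 : MeasurePreserving (fun ω : ℕ → E => ω 1) Pstar μstar := ⟨measurable_pi_apply 1, m1⟩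
  have hZ : MemLp (ZFun π ψ 1) 2 Pstar :=
    ((hχ.comp_measurePreserving p1).sub (hχ.comp_measurePreserving p0)).add
      (hψ2.comp_measurePreserving p1)
  exact hZ.integrable_sq
end
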